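/- Let D be a strictly convex planar domain whose boundary is parametrized by a smooth ℓ-periodic curve γ: ℝ → ℝ², injective on [0,ℓ), positively oriented, with ω(γ'(t),γ''(t)) > 0 for all t. If the symplectic billiard in D has no conjugate points, then ∫∫_P [L₁₁(t₁,t₂) + 2L₁₂(t₁,t₂) + L₂₂(t₁,t₂)] · L₁₂(t₁,t₂) dt₁ dt₂ ≤ 0, where P = {(t₁,t₂) ∈ [0,ℓ]² : ω(γ'(t₁),γ'(t₂)) > 0}. -/

import Mathlib

open Set MeasureTheory

/-- The standard area form on ℝ². -/
noncomputable def om (u v : ℝ × ℝ) : ℝ := u.1 * v.2 - v.1 * u.2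

/-- L₁₁(t₁,t₂) = ω(γ''(t₁), γ(t₂)). -/
noncomputable def L11 (γ : ℝ → ℝ × ℝ) (t₁ t₂ : ℝ) : ℝ := om (deriv (deriv γ) t₁) (γ t₂)

/-- L₂₂(t₁,t₂) = ω(γ(t₁), γ''(t₂)). -/
noncomputable def L22 (γ : ℝ → ℝ × ℝ) (t₁ t₂ : ℝ) : ℝ := om (γ t₁) (deriv (deriv γ) t₂)

/-- L₁₂(t₁,t₂) = ω(γ'(t₁), γ'(t₂)). -/
noncomputable def L12 (γ : ℝ → ℝ × ℝ) (t₁ t₂ : ℝ) : ℝ := om (deriv γ t₁) (deriv γ t₂)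

/-- A symplectic billiard configuration: the phase-space condition and the reflection law. -/
def IsConfiguration (γ : ℝ → ℝ × ℝ) (t : ℤ → ℝ) : Prop :=
  (∀ n : ℤ, 0 < om (deriv γ (t n)) (deriv γ (t (n + 1)))) ∧
  (∀ n : ℤ, om (deriv γ (t n)) (γ (t (n + 1)) - γ (t (n - 1))) = 0)

/-- A Jacobi field along a configuration. -/
def IsJacobiField (γ : ℝ → ℝ × ℝ) (t : ℤ → ℝ) (ξ : ℤ → ℝ) : Prop :=
  ∀ n : ℤ, L12 γ (t (n - 1)) (t n) * ξ (n - 1)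
    + (L22 γ (t (n - 1)) (t n) + L11 γ (t n) (t (n + 1))) * ξ n
    + L12 γ (t n) (t (n + 1)) * ξ (n + 1) = 0

open Filter Topology

/-!
Write `σ t` for the parameter past `t` at which the tangent is opposite to the one at `t`. The
reflection law says that the points before and after `γ b` on a trajectory have the same height over
the tangent at `b`, and this height is monotone on each of the two arcs between `b` and `σ b`;
inverting it gives a continuous inverse billiard map `B` on the phase space `L₁₂ > 0`. Since the
height has derivative `± L₁₂`, the change of variables formula shows that `B` preserves the area
`L₁₂ dt₁ dt₂`.

The Jacobi equation is a three-term recurrence. Its pivots `d₀ = -(L₁₁ + L₂₂ ∘ B)`,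
`dₙ₊₁ = d₀ - (L₁₂ ∘ B)² / (dₙ ∘ B)` are slopes of Jacobi fields with a zero in the past, so the
first pivot to vanish would give a Jacobi field with two zeros. Each `dₙ` is positive near the
diagonal of the phase space, hence, without conjugate points, it is positive everywhere by
connectedness. As `x² / d ≥ 2 x - d`, integrating the recurrence against the invariant area gives
`∫ dₙ₊₁ + J ≤ ∫ dₙ`, where `J` is the integral to be estimated. If `J` were positive, the
nonnegative sequence `∫ dₙ` would eventually become negative.
-/

/-- A locally convex plane curve `c`, parametrised by the angle of its tangent, with radius of
curvature `ρ`. -/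
structure IsAngleParametrized (c : ℝ → ℂ) (ρ : ℝ → ℝ) : Prop where
  radius_pos : ∀ x, 0 < ρ x
  hasDerivAt : ∀ x, HasDerivAt c (ρ x * Complex.exp (x * Complex.I)) x

lemma exists_eq_zero_deriv_nonpos {g g' : ℝ → ℝ} (hg : ∀ x, HasDerivAt g (g' x) x) {a b : ℝ}
    (hab : a < b) (ha : 0 ≤ g a) (hb : g b ≤ 0) : ∃ z, g z = 0 ∧ g' z ≤ 0 := by
  by_contra! h
  have hnonneg : ∀ x, a ≤ x → 0 ≤ g x := fun x hx => neg_nonpos.1 <|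
    image_le_of_deriv_right_lt_deriv_boundary' (B := 0) (B' := 0)
      (fun y _ => (hg y).neg.continuousAt.continuousWithinAt)
      (fun y _ => (hg y).neg.hasDerivWithinAt) (neg_nonpos.2 ha) continuousOn_const
      (fun y _ => hasDerivWithinAt_const _ _ _)
      (fun y _ hy => neg_neg_of_pos (h y (neg_eq_zero.1 hy))) (right_mem_Icc.2 hx)
  have hzero : g b = 0 := hb.antisymm (hnonneg b hab.le)
  have hmin : IsLocalMin g b := by
    filter_upwards [Ioi_mem_nhds hab] with x hx
    exact hzero ▸ hnonneg x hx.le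
  exact (h b hzero).ne' (hmin.hasDerivAt_eq_zero (hg b))

section Unimodal

variable {f : ℝ → ℝ} {a b b' c : ℝ}

lemma exists_partner_of_mem_left (hf : Continuous f) (hbc : b' ≤ c)
    (hmono : MonotoneOn f (Icc a b)) (hb : f b ≤ f b') (hac : f a = f c) {x : ℝ}
    (hx : x ∈ Icc a b) : ∃ y ∈ Icc b' c, f x = f y := by
  have hab : a ≤ b := hx.1.trans hx.2
  obtain ⟨y, hy, h⟩ := intermediate_value_Icc' hbc hf.continuousOn
    ⟨hac ▸ hmono (left_mem_Icc.2 hab) hx hx.1, (hmono hx (right_mem_Icc.2 hab) hx.2).trans hb⟩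
  exact ⟨y, hy, h.symm⟩

lemma exists_partner_of_mem_right (hf : Continuous f) (hab : a ≤ b)
    (hanti : AntitoneOn f (Icc b c)) (hac : f a = f c) {y : ℝ} (hy : y ∈ Icc b c) :
    ∃ x ∈ Icc a b, f x = f y := by
  have hbc : b ≤ c := hy.1.trans hy.2
  exact intermediate_value_Icc hab hf.continuousOn
    ⟨hac ▸ hanti hy (right_mem_Icc.2 hbc) hy.2, hanti (left_mem_Icc.2 hbc) hy hy.1⟩

lemma isPreconnected_partners (hf : Continuous f) (hbc : b' ≤ c) (hmono : MonotoneOn f (Icc a b))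
    (hanti : StrictAntiOn f (Icc b' c)) (hb : f b ≤ f b') (hac : f a = f c) :
    IsPreconnected {p ∈ Icc a b ×ˢ Icc b' c | f p.1 = f p.2} := by
  set K := {p ∈ Icc a b ×ˢ Icc b' c | f p.1 = f p.2}
  have hK : IsCompact K :=
    (isCompact_Icc.prod isCompact_Icc).inter_right (isClosed_eq (by fun_prop) (by fun_prop))
  have : CompactSpace K := isCompact_iff_compactSpace.1 hK
  have hinj : Function.Injective fun p : K => p.1.1 := by
    rintro ⟨⟨x, y⟩, hxy, h⟩ ⟨⟨_, y'⟩, hxy', h'⟩ rfl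
    obtain rfl : y = y' := hanti.injOn hxy.2 hxy'.2 (h.symm.trans h')
    rfl
  have hrange : Icc a b ⊆ range fun p : K => p.1.1 := fun x hx => by
    obtain ⟨y, hy, h⟩ := exists_partner_of_mem_left hf hbc hmono hb hac hx
    exact ⟨⟨(x, y), ⟨hx, hy⟩, h⟩, rfl⟩
  have hpre := isPreconnected_Icc.preimage_of_isClosedMap hinj
    (Continuous.isClosedMap (by fun_prop)) hrange
  convert hpre.image _ continuous_subtype_val.continuousOn
  ext p
  simp only [mem_image, mem_preimage, Subtype.exists, exists_and_left, exists_prop,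
    exists_eq_right_right]
  exact ⟨fun hp => ⟨hp.1.1, hp⟩, And.right⟩

end Unimodal

namespace IsAngleParametrized

variable {c : ℝ → ℂ} {ρ : ℝ → ℝ} (hc : IsAngleParametrized c ρ)

include hc

lemma continuous : Continuous c :=
  continuous_iff_continuousAt.2 fun x => (hc.hasDerivAt x).continuousAt

lemma hasDerivAt_re (x : ℝ) : HasDerivAt (fun x => (c x).re) (ρ x * Real.cos x) x := by
  refine (Complex.reCLM.hasFDerivAt.comp_hasDerivAt x (hc.hasDerivAt x)).congr_deriv ?_
  simp only [Complex.reCLM_apply, Complex.re_ofReal_mul, Complex.exp_ofReal_mul_I_re]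

lemma hasDerivAt_im (x : ℝ) : HasDerivAt (fun x => (c x).im) (ρ x * Real.sin x) x := by
  refine (Complex.imCLM.hasFDerivAt.comp_hasDerivAt x (hc.hasDerivAt x)).congr_deriv ?_
  simp only [Complex.imCLM_apply, Complex.im_ofReal_mul, Complex.exp_ofReal_mul_I_im]

lemma strictMonoOn_im : StrictMonoOn (fun x => (c x).im) (Icc 0 Real.pi) := by
  have := hc.continuous
  refine strictMonoOn_of_deriv_pos (convex_Icc _ _) (by fun_prop) fun x hx => ?_
  rw [interior_Icc] at hx
  rw [(hc.hasDerivAt_im x).deriv]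
  exact mul_pos (hc.radius_pos x) (Real.sin_pos_of_mem_Ioo hx)

lemma strictAntiOn_im : StrictAntiOn (fun x => (c x).im) (Icc Real.pi (2 * Real.pi)) := by
  have := hc.continuous
  refine strictAntiOn_of_deriv_neg (convex_Icc _ _) (by fun_prop) fun x hx => ?_
  rw [interior_Icc] at hx
  rw [(hc.hasDerivAt_im x).deriv, ← Real.sin_sub_two_pi]
  exact mul_neg_of_pos_of_neg (hc.radius_pos x)
    (Real.sin_neg_of_neg_of_neg_pi_lt (by linarith [hx.2]) (by linarith [hx.1]))

lemma strictAntiOn_re :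
    StrictAntiOn (fun x => (c x).re) (Icc (Real.pi / 2) (3 * Real.pi / 2)) := by
  have := hc.continuous
  refine strictAntiOn_of_deriv_neg (convex_Icc _ _) (by fun_prop) fun x hx => ?_
  rw [interior_Icc] at hx
  rw [(hc.hasDerivAt_re x).deriv]
  exact mul_neg_of_pos_of_neg (hc.radius_pos x)
    (Real.cos_neg_of_pi_div_two_lt_of_lt hx.1 (by linarith [hx.2]))

lemma rotate (z : ℝ) : IsAngleParametrized
    (fun x => Complex.exp (-z * Complex.I) * c (z + x)) (fun x => ρ (z + x)) where
  radius_pos x := hc.radius_pos _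
  hasDerivAt x := by
    refine (((hc.hasDerivAt (z + x)).comp_const_add z x).const_mul _).congr_deriv ?_
    rw [mul_left_comm, ← Complex.exp_add]
    push_cast
    ring_nf

lemma exists_re_le_re_of_im_eq_im (h : (c 0).im = (c (2 * Real.pi)).im) :
    ∃ x ∈ Ico 0 Real.pi, ∃ y ∈ Icc Real.pi (2 * Real.pi),
      (c x).im = (c y).im ∧ (c y).re ≤ (c x).re := by
  have hpi := Real.pi_pos
  have hcont : Continuous fun x => (c x).im := Complex.continuous_im.comp hc.continuous
  have hleft : Real.pi / 2 ∈ Icc 0 Real.pi := ⟨by linarith, by linarith⟩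
  have hright : 3 * Real.pi / 2 ∈ Icc Real.pi (2 * Real.pi) := ⟨by linarith, by linarith⟩
  have htop : Real.pi ∈ Icc Real.pi (2 * Real.pi) := ⟨le_rfl, by linarith⟩
  obtain ⟨y, hy, hxy⟩ := exists_partner_of_mem_left hcont htop.2
    hc.strictMonoOn_im.monotoneOn le_rfl h hleft
  rcases le_total y (3 * Real.pi / 2) with hy' | hy'
  · exact ⟨_, ⟨hleft.1, by linarith⟩, y, hy, hxy, hc.strictAntiOn_re.antitoneOn
      ⟨le_rfl, by linarith⟩ ⟨by linarith [hy.1], hy'⟩ (by linarith [hy.1])⟩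
  · obtain ⟨x, hx, hxy'⟩ := exists_partner_of_mem_right hcont hpi.le
      hc.strictAntiOn_im.antitoneOn h hright
    have hpi_le : Real.pi / 2 ≤ x := by
      refine (hc.strictMonoOn_im.le_iff_le hleft hx).1 ?_
      rw [hxy, hxy']
      exact hc.strictAntiOn_im.antitoneOn hright hy hy'
    have hlt_pi : x < Real.pi := hx.2.lt_of_ne <| by
      rintro rfl
      exact (hc.strictAntiOn_im htop hright (by linarith)).ne' hxy'
    exact ⟨x, ⟨hx.1, hlt_pi⟩, _, hright, hxy', hc.strictAntiOn_re.antitoneOn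
      ⟨hpi_le, by linarith⟩ ⟨by linarith, le_rfl⟩ (by linarith)⟩

/- At the bottom level the falling branch of the arc lies to the right of the rising one, while
at the level of the higher of its two vertical tangents it lies to the left: in between the
branches cross. -/
lemma exists_self_intersection (him : (c 0).im = (c (2 * Real.pi)).im)
    (hre : (c 0).re < (c (2 * Real.pi)).re) :
    ∃ x y, x < y ∧ y < x + 2 * Real.pi ∧ c x = c y := by
  have hpi := Real.pi_pos
  have hcont := hc.continuous
  obtain ⟨x₁, hx₁, y₁, hy₁, him₁, hre₁⟩ := hc.exists_re_le_re_of_im_eq_im him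
  have hmono := hc.strictMonoOn_im.monotoneOn
  have hpartners := isPreconnected_partners (f := fun x => (c x).im) (by fun_prop)
    (by linarith) (hmono.mono (Icc_subset_Icc_right hx₁.2.le)) hc.strictAntiOn_im
    (hmono ⟨hx₁.1, hx₁.2.le⟩ ⟨hpi.le, le_rfl⟩ hx₁.2.le) him
  obtain ⟨⟨x, y⟩, ⟨⟨hx, hy⟩, him'⟩, hre'⟩ :=
    hpartners.intermediate_value₂ (a := (0, 2 * Real.pi)) (b := (x₁, y₁))
      (f := fun p => (c p.1).re) (g := fun p => (c p.2).re)
      ⟨⟨⟨le_rfl, hx₁.1⟩, ⟨by linarith, le_rfl⟩⟩, him⟩ ⟨⟨⟨hx₁.1, le_rfl⟩, hy₁⟩, him₁⟩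
      (by fun_prop) (by fun_prop) hre.le hre₁
  have hxy : c x = c y := Complex.ext hre' him'
  refine ⟨x, y, hx.2.trans_lt (hx₁.2.trans_le hy.1), ?_, hxy⟩
  rcases hx.1.eq_or_lt with rfl | hx0
  · rw [zero_add]
    refine hy.2.lt_of_ne ?_
    rintro rfl
    exact hre.ne (congrArg Complex.re hxy)
  · linarith [hy.2]

lemma hasDerivAt_im_rotated_chord (x : ℝ) : HasDerivAt
    (fun x : ℝ => (Complex.exp (-x * Complex.I) * (c (x + 2 * Real.pi) - c x)).im)
    (-(Complex.exp (-x * Complex.I) * (c (x + 2 * Real.pi) - c x)).re) x := by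
  have hexp : HasDerivAt (fun x : ℝ => Complex.exp (-x * Complex.I))
      (Complex.exp (-x * Complex.I) * (-1 * Complex.I)) x :=
    ((Complex.ofRealCLM.hasDerivAt.neg.mul_const Complex.I).cexp)
  have hshift : HasDerivAt (fun x => c (x + 2 * Real.pi))
      (ρ (x + 2 * Real.pi) * Complex.exp (x * Complex.I)) x := by
    refine ((hc.hasDerivAt _).comp_add_const x _).congr_deriv ?_
    push_cast
    rw [add_mul, Complex.exp_periodic]
  have hcancel : Complex.exp (-x * Complex.I) * Complex.exp (x * Complex.I) = 1 := by
    rw [← Complex.exp_add, neg_mul, neg_add_cancel, Complex.exp_zero]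
  have hq : HasDerivAt (fun x : ℝ => Complex.exp (-x * Complex.I) * (c (x + 2 * Real.pi) - c x))
      ((ρ (x + 2 * Real.pi) - ρ x : ℝ) -
        Complex.exp (-x * Complex.I) * (c (x + 2 * Real.pi) - c x) * Complex.I) x := by
    refine (hexp.mul (hshift.sub (hc.hasDerivAt x))).congr_deriv ?_
    push_cast [Pi.sub_apply]
    linear_combination ((ρ (x + 2 * Real.pi) : ℂ) - ρ x) * hcancel
  refine (Complex.imCLM.hasFDerivAt.comp_hasDerivAt x hq).congr_deriv ?_
  rw [Complex.imCLM_apply, Complex.sub_im, Complex.ofReal_im, Complex.mul_I_im, zero_sub]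

/- Let `h x` be the signed distance from the origin to the tangent of direction `x`, and `θ` a
maximiser of `h`. The full turn ending at `θ` does not decrease `h` and the one starting at `θ`
does not increase it, so some turn in between returns to its initial tangent, ahead of its initial
point. -/
lemma exists_self_intersection_of_two_pi_lt {P : ℝ} (hper : Function.Periodic c P)
    (hP : Complex.exp (P * Complex.I) = 1) (hlt : 2 * Real.pi < P) :
    ∃ x y, x < y ∧ y < x + P ∧ c x = c y := by
  have hpi := Real.pi_pos
  set h : ℝ → ℝ := fun x => (Complex.exp (-x * Complex.I) * c x).im
  have hh : Continuous h := by have := hc.continuous; fun_prop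
  have hh_per : Function.Periodic h P := fun x => by
    simp only [h, hper x, Complex.ofReal_add, neg_add, add_mul, Complex.exp_add,
      neg_mul _ Complex.I, Complex.exp_neg (P * Complex.I), hP, inv_one, mul_one]
  obtain ⟨θ, -, hθ⟩ := isCompact_Icc.exists_isMaxOn
    (nonempty_Icc.2 (show (0 : ℝ) ≤ P by linarith)) hh.continuousOn
  have hmax : ∀ x, h x ≤ h θ := fun x => by
    obtain ⟨y, hy, hxy⟩ := hh_per.exists_mem_Ico₀ (by linarith) x
    exact hxy ▸ hθ (Ico_subset_Icc_self hy)
  have hchord : ∀ x : ℝ, (Complex.exp (-x * Complex.I) * (c (x + 2 * Real.pi) - c x)).im =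
      h (x + 2 * Real.pi) - h x := fun x => by
    simp only [h, mul_sub, Complex.sub_im]
    push_cast
    rw [← Complex.exp_periodic.sub_eq (-x * Complex.I)]
    ring_nf
  obtain ⟨z, hz, hz'⟩ := exists_eq_zero_deriv_nonpos hc.hasDerivAt_im_rotated_chord
    (sub_lt_self θ Real.two_pi_pos)
    (by rw [hchord, sub_add_cancel]; exact sub_nonneg.2 (hmax _))
    (by rw [hchord]; exact sub_nonpos.2 (hmax _))
  have hrot := hc.rotate z
  rcases (neg_nonpos.1 hz').eq_or_lt with hre | hre
  · refine ⟨z, z + 2 * Real.pi, by linarith, by linarith, ?_⟩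
    have hq := Complex.ext (w := 0) hre.symm hz
    exact (sub_eq_zero.1 ((mul_eq_zero.1 hq).resolve_left (Complex.exp_ne_zero _))).symm
  · rw [mul_sub, Complex.sub_im, sub_eq_zero] at hz
    rw [mul_sub, Complex.sub_re, sub_pos] at hre
    obtain ⟨x, y, hxy, hyx, heq⟩ := hrot.exists_self_intersection
      (by rw [add_zero]; exact hz.symm) (by rw [add_zero]; exact hre)
    exact ⟨z + x, z + y, by linarith, by linarith,
      mul_left_cancel₀ (Complex.exp_ne_zero _) heq⟩

lemma exp_period_mul_I {P : ℝ} (hper : Function.Periodic c P) :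
    Complex.exp (P * Complex.I) = 1 := by
  have hderiv : (ρ P : ℂ) * Complex.exp (P * Complex.I) = ρ 0 := by
    have h0 := (hc.hasDerivAt (0 + P)).comp_add_const 0 P
    simp only [funext hper] at h0
    simpa using h0.unique (hc.hasDerivAt 0)
  have hρ : ρ P = ρ 0 := by
    have := congrArg norm hderiv
    rwa [norm_mul, Complex.norm_exp_ofReal_mul_I, mul_one, Complex.norm_real, Complex.norm_real,
      Real.norm_of_nonneg (hc.radius_pos _).le, Real.norm_of_nonneg (hc.radius_pos _).le] at this
  rw [hρ] at hderiv
  exact mul_eq_left₀ (Complex.ofReal_ne_zero.2 (hc.radius_pos 0).ne') |>.1 hderiv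

theorem period_eq_two_pi {P : ℝ} (hP : 0 < P) (hper : Function.Periodic c P)
    (hinj : ∀ x, InjOn c (Ico x (x + P))) : P = 2 * Real.pi := by
  have hexp := hc.exp_period_mul_I hper
  obtain ⟨n, hn⟩ := Complex.exp_eq_one_iff.1 hexp
  have hPn : P = n * (2 * Real.pi) := by
    rw [← mul_assoc] at hn
    exact_mod_cast mul_right_cancel₀ Complex.I_ne_zero hn
  have hn_pos : 1 ≤ n := by
    have : (0 : ℝ) < n := pos_of_mul_pos_left (hPn ▸ hP) Real.two_pi_pos.le
    exact_mod_cast this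
  refine (eq_of_le_of_not_lt ?_ fun hlt => ?_).symm
  · have : (1 : ℝ) ≤ n := by exact_mod_cast hn_pos
    rw [hPn]
    exact le_mul_of_one_le_left Real.two_pi_pos.le this
  · obtain ⟨x, y, hxy, hyx, heq⟩ := hc.exists_self_intersection_of_two_pi_lt hper hexp hlt
    exact hxy.ne (hinj x ⟨le_rfl, hxy.trans hyx⟩ ⟨hxy.le, hyx⟩ heq)

end IsAngleParametrized

section TangentAngle

lemma exists_log_lift {z z' : ℝ → ℂ} (hz : ∀ t, HasDerivAt z (z' t) t) (hz' : Continuous z')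
    (hz0 : ∀ t, z t ≠ 0) :
    ∃ L : ℝ → ℂ, (∀ t, HasDerivAt L (z' t / z t) t) ∧ ∀ t, Complex.exp (L t) = z t := by
  have hcont : Continuous z := continuous_iff_continuousAt.2 fun t => (hz t).continuousAt
  set L : ℝ → ℂ := fun t => Complex.log (z 0) + ∫ s in (0 : ℝ)..t, z' s / z s
  have hL : ∀ t, HasDerivAt L (z' t / z t) t := fun t =>
    ((hz'.div hcont hz0).integral_hasStrictDerivAt 0 t).hasDerivAt.const_add _
  have hquot : ∀ t, HasDerivAt (fun t => z t * Complex.exp (-L t)) 0 t := fun t => by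
    refine ((hz t).mul (hL t).neg.cexp).congr_deriv ?_
    field_simp [hz0 t]
    ring
  refine ⟨L, hL, fun t => ?_⟩
  have hconst : z t * Complex.exp (-L t) = z 0 * Complex.exp (-L 0) :=
    is_const_of_deriv_eq_zero (fun t => (hquot t).differentiableAt) (fun t => (hquot t).deriv) t 0
  have hL0 : L 0 = Complex.log (z 0) := by simp only [L, intervalIntegral.integral_same, add_zero]
  rw [hL0, Complex.exp_neg, Complex.exp_neg, Complex.exp_log (hz0 0), mul_inv_cancel₀ (hz0 0)]
    at hconst
  exact (eq_of_mul_inv_eq_one hconst).symm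

lemma surjective_of_map_add_const {f : ℝ → ℝ} (hf : Continuous f) {a b : ℝ} (hb : 0 < b)
    (h : ∀ x, f (x + a) = f x + b) : Function.Surjective f := fun y => by
  obtain ⟨n, hn, -⟩ := existsUnique_add_zsmul_mem_Ico hb y (f 0)
  obtain ⟨x, -, hx⟩ : y + n • b ∈ f '' uIcc 0 (0 + a) := by
    refine intermediate_value_uIcc hf.continuousOn ?_
    rw [h, uIcc_of_le (by linarith)]
    exact Ico_subset_Icc_self hn
  refine ⟨x - n • a, ?_⟩
  have := AddConstMapClass.map_sub_zsmul (⟨f, h⟩ : AddConstMap ℝ ℝ a b) x n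
  exact this.trans (sub_eq_of_eq_add hx)

lemma injOn_Ico_of_periodic {α : Type*} {f : ℝ → α} {P : ℝ} (hP : 0 < P)
    (hf : Function.Periodic f P) (hinj : InjOn f (Ico 0 P)) (a : ℝ) :
    InjOn f (Ico a (a + P)) := fun x hx y hy hxy => by
  have hmod : ∀ x, f (toIcoMod hP 0 x) = f x := fun x => hf.sub_zsmul_eq _
  have hmem : ∀ x, toIcoMod hP 0 x ∈ Ico 0 P := fun x => by
    simpa only [zero_add] using toIcoMod_mem_Ico hP 0 x
  have h0 := hinj (hmem x) (hmem y) (by rw [hmod, hmod, hxy])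
  rw [toIcoMod_inj, ← toIcoMod_inj hP (c := a)] at h0
  rwa [(toIcoMod_eq_self hP).2 hx, (toIcoMod_eq_self hP).2 hy] at h0

/-- `Θ` is a continuous determination of the angle of the tangent to the plane curve `γ`, and `r`
is the speed of `γ`. -/
structure IsTangentAngle (γ : ℝ → ℝ × ℝ) (Θ r : ℝ → ℝ) : Prop where
  speed_pos : ∀ t, 0 < r t
  deriv_eq : ∀ t, deriv γ t = (r t * Real.cos (Θ t), r t * Real.sin (Θ t))
  hasDerivAt : ∀ t, HasDerivAt Θ
    (om (deriv γ t) (deriv (deriv γ) t) / ((deriv γ t).1 ^ 2 + (deriv γ t).2 ^ 2)) t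

variable {ℓ : ℝ} {γ : ℝ → ℝ × ℝ}

lemma hasDerivAt_of_contDiff_two (hγ : ContDiff ℝ 2 γ) (t : ℝ) : HasDerivAt γ (deriv γ t) t :=
  (hγ.differentiable (by decide) t).hasDerivAt

lemma contDiff_deriv_of_contDiff_two (hγ : ContDiff ℝ 2 γ) : ContDiff ℝ 1 (deriv γ) :=
  (contDiff_succ_iff_deriv (n := 1).1 hγ).2.2

lemma hasDerivAt_deriv_of_contDiff_two (hγ : ContDiff ℝ 2 γ) (t : ℝ) :
    HasDerivAt (deriv γ) (deriv (deriv γ) t) t :=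
  ((contDiff_deriv_of_contDiff_two hγ).differentiable one_ne_zero t).hasDerivAt

lemma continuous_deriv_deriv_of_contDiff_two (hγ : ContDiff ℝ 2 γ) :
    Continuous (deriv (deriv γ)) :=
  (contDiff_deriv_of_contDiff_two hγ).continuous_deriv_one

lemma deriv_ne_zero_of_om_pos {t : ℝ} (h : 0 < om (deriv γ t) (deriv (deriv γ) t)) :
    deriv γ t ≠ 0 := fun h0 => by
  simp [h0, om] at h

theorem exists_isTangentAngle (hγ : ContDiff ℝ 2 γ) (h0 : ∀ t, deriv γ t ≠ 0) :
    ∃ Θ r, IsTangentAngle γ Θ r := by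
  set J := Complex.equivRealProdCLM.symm
  obtain ⟨L, hL, hexp⟩ := exists_log_lift (z := fun t => J (deriv γ t))
    (fun t => J.hasFDerivAt.comp_hasDerivAt t (hasDerivAt_deriv_of_contDiff_two hγ t))
    (J.continuous.comp (continuous_deriv_deriv_of_contDiff_two hγ))
    (fun t => (map_ne_zero_iff _ J.injective).2 (h0 t))
  refine ⟨fun t => (L t).im, fun t => Real.exp (L t).re, fun t => Real.exp_pos _, fun t => ?_,
    fun t => ?_⟩
  · have hre := congrArg Complex.re (hexp t)
    have him := congrArg Complex.im (hexp t)
    rw [Complex.exp_re] at hre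
    rw [Complex.exp_im] at him
    exact Prod.ext hre.symm him.symm
  · refine (Complex.imCLM.hasFDerivAt.comp_hasDerivAt t (hL t)).congr_deriv ?_
    rw [Complex.imCLM_apply, Complex.div_im, ← sub_div, Complex.normSq_apply]
    simp only [om, J, ContinuousLinearEquiv.coe_coe, Complex.equivRealProdCLM_symm_apply_re,
      Complex.equivRealProdCLM_symm_apply_im]
    ring_nf

lemma periodic_deriv {E : Type*} [NormedAddCommGroup E] [NormedSpace ℝ E] {f : ℝ → E} {P : ℝ}
    (hf : Function.Periodic f P) : Function.Periodic (deriv f) P := fun t => by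
  rw [← deriv_comp_add_const, funext hf]

namespace IsTangentAngle

variable {Θ r : ℝ → ℝ} (hΘ : IsTangentAngle γ Θ r)

include hΘ

lemma continuous : Continuous Θ :=
  continuous_iff_continuousAt.2 fun t => (hΘ.hasDerivAt t).continuousAt

lemma sq_add_sq_pos (t : ℝ) : 0 < (deriv γ t).1 ^ 2 + (deriv γ t).2 ^ 2 := by
  have : (deriv γ t).1 ^ 2 + (deriv γ t).2 ^ 2 = r t ^ 2 := by
    rw [hΘ.deriv_eq]
    linear_combination r t ^ 2 * Real.cos_sq_add_sin_sq (Θ t)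
  rw [this]
  exact pow_pos (hΘ.speed_pos t) 2

lemma strictMono (hcurv : ∀ t, 0 < om (deriv γ t) (deriv (deriv γ) t)) : StrictMono Θ :=
  strictMono_of_deriv_pos fun t => by
    rw [(hΘ.hasDerivAt t).deriv]
    exact div_pos (hcurv t) (hΘ.sq_add_sq_pos t)

lemma L12_eq (s t : ℝ) : L12 γ s t = r s * r t * Real.sin (Θ t - Θ s) := by
  simp only [L12, om, hΘ.deriv_eq, Real.sin_sub]
  ring

lemma exists_map_add_period (hper : Function.Periodic γ ℓ) :
    ∃ C, ∀ t, Θ (t + ℓ) = Θ t + C := by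
  have hper' := periodic_deriv hper
  have hdiff : ∀ t, HasDerivAt (fun t => Θ (t + ℓ) - Θ t) 0 t := fun t => by
    refine (((hΘ.hasDerivAt (t + ℓ)).comp_add_const t ℓ).sub (hΘ.hasDerivAt t)).congr_deriv ?_
    rw [hper', periodic_deriv hper', sub_self]
  refine ⟨Θ (0 + ℓ) - Θ 0, fun t => ?_⟩
  rw [← is_const_of_deriv_eq_zero (fun t => (hdiff t).differentiableAt)
    (fun t => (hdiff t).deriv) t 0, add_sub_cancel]

lemma isAngleParametrized (hγ : ContDiff ℝ 2 γ)
    (hcurv : ∀ t, 0 < om (deriv γ t) (deriv (deriv γ) t)) {φ : ℝ → ℝ} (hφ : Continuous φ)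
    (hΘφ : ∀ x, Θ (φ x) = x) :
    ∃ ρ, IsAngleParametrized (fun x => Complex.equivRealProdCLM.symm (γ (φ x))) ρ := by
  set k : ℝ → ℝ := fun t =>
    om (deriv γ t) (deriv (deriv γ) t) / ((deriv γ t).1 ^ 2 + (deriv γ t).2 ^ 2)
  have hk : ∀ t, 0 < k t := fun t => div_pos (hcurv t) (hΘ.sq_add_sq_pos t)
  refine ⟨fun x => r (φ x) * (k (φ x))⁻¹,
    fun x => mul_pos (hΘ.speed_pos _) (inv_pos.2 (hk _)), fun x => ?_⟩
  have hφ' : HasDerivAt φ (k (φ x))⁻¹ x := HasDerivAt.of_local_left_inverse hφ.continuousAt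
    (hΘ.hasDerivAt _) (hk _).ne' (Eventually.of_forall hΘφ)
  refine (Complex.equivRealProdCLM.symm.hasFDerivAt.comp_hasDerivAt x
    ((hasDerivAt_of_contDiff_two hγ (φ x)).scomp x hφ')).congr_deriv ?_
  rw [hΘ.deriv_eq, hΘφ]
  apply Complex.ext
  · simp only [ContinuousLinearEquiv.coe_coe, Complex.equivRealProdCLM_symm_apply_re,
      Complex.re_ofReal_mul, Complex.exp_ofReal_mul_I_re, Prod.smul_mk, smul_eq_mul]
    ring
  · simp only [ContinuousLinearEquiv.coe_coe, Complex.equivRealProdCLM_symm_apply_im,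
      Complex.im_ofReal_mul, Complex.exp_ofReal_mul_I_im, Prod.smul_mk, smul_eq_mul]
    ring

theorem add_period_eq_add_two_pi (hγ : ContDiff ℝ 2 γ)
    (hcurv : ∀ t, 0 < om (deriv γ t) (deriv (deriv γ) t)) (hℓ : 0 < ℓ)
    (hper : Function.Periodic γ ℓ) (hinj : InjOn γ (Ico 0 ℓ)) (t : ℝ) :
    Θ (t + ℓ) = Θ t + 2 * Real.pi := by
  obtain ⟨C, hC⟩ := hΘ.exists_map_add_period hper
  have hmono := hΘ.strictMono hcurv
  have hC_pos : 0 < C := by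
    have := hmono (lt_add_of_pos_right 0 hℓ)
    rwa [hC, lt_add_iff_pos_right] at this
  set φ := (hmono.orderIsoOfSurjective Θ (surjective_of_map_add_const hΘ.continuous hC_pos hC)).symm
  have hΘφ : ∀ x, Θ (φ x) = x := φ.symm_apply_apply
  have hφΘ : ∀ x, φ (Θ x) = x := φ.apply_symm_apply
  have hφC : ∀ x, φ (x + C) = φ x + ℓ := fun x => by
    rw [← hφΘ (φ x + ℓ), hC, hΘφ]
  obtain ⟨ρ, hρ⟩ := hΘ.isAngleParametrized hγ hcurv φ.continuous hΘφ
  suffices C = 2 * Real.pi by rw [hC, this]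
  refine hρ.period_eq_two_pi hC_pos (fun x => by simp only [hφC, hper (φ x)]) fun a => ?_
  refine Complex.equivRealProdCLM.symm.injective.comp_injOn
    ((injOn_Ico_of_periodic hℓ hper hinj (φ a)).comp φ.injective.injOn fun x hx => ?_)
  exact ⟨φ.monotone hx.1, hφC a ▸ φ.strictMono hx.2⟩

end IsTangentAngle

end TangentAngle

/-- `γ` is a `C²` parametrisation, of period `ℓ`, of the boundary of a strictly convex domain;
`σ t` is the parameter in `(t, t + ℓ)` of the other boundary point whose tangent is parallel to
the one at `t`. -/
structure IsOval (ℓ : ℝ) (γ : ℝ → ℝ × ℝ) (σ : ℝ → ℝ) : Prop where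
  period_pos : 0 < ℓ
  contDiff : ContDiff ℝ 2 γ
  periodic : Function.Periodic γ ℓ
  curvature_pos : ∀ t, 0 < om (deriv γ t) (deriv (deriv γ) t)
  continuous_antipode : Continuous σ
  antipode_add_period : ∀ t, σ (t + ℓ) = σ t + ℓ
  lt_antipode : ∀ t, t < σ t
  antipode_lt : ∀ t, σ t < t + ℓ
  L12_pos : ∀ {t x}, t < x → x < σ t → 0 < L12 γ t x
  L12_antipode : ∀ t, L12 γ t (σ t) = 0
  L12_neg : ∀ {t x}, σ t < x → x < t + ℓ → L12 γ t x < 0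

theorem exists_isOval {ℓ : ℝ} {γ : ℝ → ℝ × ℝ} (hℓ : 0 < ℓ) (hγ : ContDiff ℝ 2 γ)
    (hper : Function.Periodic γ ℓ) (hinj : InjOn γ (Ico 0 ℓ))
    (hcurv : ∀ t, 0 < om (deriv γ t) (deriv (deriv γ) t)) : ∃ σ, IsOval ℓ γ σ := by
  have hpi := Real.pi_pos
  obtain ⟨Θ, r, hΘ⟩ := exists_isTangentAngle hγ fun t => deriv_ne_zero_of_om_pos (hcurv t)
  have hΘ_add := hΘ.add_period_eq_add_two_pi hγ hcurv hℓ hper hinj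
  have hmono := hΘ.strictMono hcurv
  set φ := (hmono.orderIsoOfSurjective Θ
    (surjective_of_map_add_const hΘ.continuous Real.two_pi_pos hΘ_add)).symm
  have hΘφ : ∀ x, Θ (φ x) = x := φ.symm_apply_apply
  have hL12 : ∀ t x, L12 γ t x = r t * r x * Real.sin (Θ x - Θ t) := hΘ.L12_eq
  have hr : ∀ t x, 0 < r t * r x := fun t x => mul_pos (hΘ.speed_pos t) (hΘ.speed_pos x)
  refine ⟨fun t => φ (Θ t + Real.pi), hℓ, hγ, hper, hcurv,
    φ.continuous.comp (hΘ.continuous.add continuous_const), fun t => hmono.injective ?_,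
    fun t => hmono.lt_iff_lt.1 ?_, fun t => hmono.lt_iff_lt.1 ?_, fun {t x} htx hx => ?_,
    fun t => ?_, fun {t x} hx hxt => ?_⟩
  · rw [hΘφ, hΘ_add, hΘ_add, hΘφ]
    ring
  · rw [hΘφ]
    linarith
  · rw [hΘφ, hΘ_add]
    linarith
  · rw [hL12]
    replace htx := hmono htx
    replace hx := hmono hx
    rw [hΘφ] at hx
    exact mul_pos (hr t x) (Real.sin_pos_of_pos_of_lt_pi (by linarith) (by linarith))
  · rw [hL12, hΘφ, add_sub_cancel_left, Real.sin_pi, mul_zero]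
  · replace hxt := hmono hxt
    replace hx := hmono hx
    rw [hΘφ] at hx
    rw [hΘ_add] at hxt
    rw [hL12, ← Real.sin_sub_two_pi]
    exact mul_neg_of_pos_of_neg (hr t x)
      (Real.sin_neg_of_neg_of_neg_pi_lt (by linarith) (by linarith))

section AreaForm

lemma om_neg_swap (u v : ℝ × ℝ) : -om v u = om u v := by
  simp only [om]
  ring

lemma om_sub_right (u v w : ℝ × ℝ) : om u (v - w) = om u v - om u w := by
  simp only [om, Prod.fst_sub, Prod.snd_sub]
  ring

lemma continuous_om {X : Type*} [TopologicalSpace X] {f g : X → ℝ × ℝ} (hf : Continuous f)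
    (hg : Continuous g) : Continuous fun x => om (f x) (g x) := by
  unfold om
  fun_prop

lemma hasDerivAt_om_right (u : ℝ × ℝ) {f : ℝ → ℝ × ℝ} {f' : ℝ × ℝ} {x : ℝ}
    (hf : HasDerivAt f f' x) : HasDerivAt (fun x => om u (f x)) (om u f') x :=
  (HasDerivAt.const_mul u.1 hf.snd).sub (HasDerivAt.mul_const hf.fst u.2)

end AreaForm

/-- The pairs of parameters `(b, c)` for which the oriented chord from `γ b` to `γ c` is a possible
segment of a billiard trajectory. -/
def phaseSpace (γ : ℝ → ℝ × ℝ) : Set (ℝ × ℝ) := {p | 0 < L12 γ p.1 p.2}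

/-- The signed area spanned by the tangent vector of `γ` at `b` and the point `γ x`: up to scaling,
the height of `γ x` over the tangent at `b`. The reflection law at `b` says that the previous and
the next point have the same height. -/
noncomputable def height (γ : ℝ → ℝ × ℝ) (b x : ℝ) : ℝ := om (deriv γ b) (γ x)

/-- The point from which the billiard arrives at `p.1` before continuing to `p.2`. -/
noncomputable def prevPoint (ℓ : ℝ) (γ : ℝ → ℝ × ℝ) (σ : ℝ → ℝ) (p : ℝ × ℝ) : ℝ :=
  Function.invFunOn (height γ p.1) (Ioo (σ p.1 - ℓ) p.1) (height γ p.1 p.2)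

/-- The inverse of the billiard map. -/
noncomputable def billiardInv (ℓ : ℝ) (γ : ℝ → ℝ × ℝ) (σ : ℝ → ℝ) (p : ℝ × ℝ) : ℝ × ℝ :=
  (prevPoint ℓ γ σ p, p.1)

lemma tendsto_of_isClosed_of_unique {X Y : Type*} [TopologicalSpace X] [TopologicalSpace Y]
    {l : Filter X} {x₀ : X} (hl : l ≤ 𝓝 x₀) {f : X → Y} {K : Set Y} (hK : IsCompact K)
    (hfK : ∀ᶠ x in l, f x ∈ K) {C : Set (X × Y)} (hC : IsClosed C)
    (hfC : ∀ᶠ x in l, (x, f x) ∈ C) {y₀ : Y} (huniq : ∀ y, (x₀, y) ∈ C → y = y₀) :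
    Tendsto f l (𝓝 y₀) := by
  refine hK.tendsto_nhds_of_unique_mapClusterPt hfK fun y _ hy => huniq y ?_
  obtain ⟨U, hU, hfU⟩ := mapClusterPt_iff_ultrafilter.1 hy
  exact hC.mem_of_tendsto ((tendsto_id'.2 (hU.trans hl)).prodMk_nhds hfU) (hU hfC)

namespace IsOval

variable {ℓ : ℝ} {γ : ℝ → ℝ × ℝ} {σ : ℝ → ℝ} (h : IsOval ℓ γ σ)

include h

section Basic

lemma continuous : Continuous γ := h.contDiff.continuous

lemma continuous_deriv : Continuous (deriv γ) := h.contDiff.continuous_deriv (by decide)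

lemma continuous_deriv_deriv : Continuous (deriv (deriv γ)) :=
  continuous_deriv_deriv_of_contDiff_two h.contDiff

lemma hasDerivAt (t : ℝ) : HasDerivAt γ (deriv γ t) t := hasDerivAt_of_contDiff_two h.contDiff t

lemma continuous_L11 : Continuous fun p : ℝ × ℝ => L11 γ p.1 p.2 :=
  continuous_om (h.continuous_deriv_deriv.comp continuous_fst) (h.continuous.comp continuous_snd)

lemma continuous_L22 : Continuous fun p : ℝ × ℝ => L22 γ p.1 p.2 :=
  continuous_om (h.continuous.comp continuous_fst) (h.continuous_deriv_deriv.comp continuous_snd)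

lemma continuous_L12 : Continuous fun p : ℝ × ℝ => L12 γ p.1 p.2 :=
  continuous_om (h.continuous_deriv.comp continuous_fst) (h.continuous_deriv.comp continuous_snd)

lemma L12_add_period_left (a b : ℝ) : L12 γ (a + ℓ) b = L12 γ a b := by
  rw [L12, periodic_deriv h.periodic, L12]

lemma L12_add_period_right (a b : ℝ) : L12 γ a (b + ℓ) = L12 γ a b := by
  rw [L12, periodic_deriv h.periodic, L12]

lemma antipode_sub_lt (b : ℝ) : σ b - ℓ < b := sub_lt_iff_lt_add.2 (h.antipode_lt b)

lemma L12_pos_iff {b c : ℝ} (hbc : b < c) (hcb : c < b + ℓ) : 0 < L12 γ b c ↔ c < σ b := by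
  refine ⟨fun hpos => ?_, h.L12_pos hbc⟩
  rcases lt_trichotomy c (σ b) with hc | rfl | hc
  · exact hc
  · exact absurd (h.L12_antipode b) hpos.ne'
  · exact absurd hpos (h.L12_neg hc hcb).not_gt

lemma L12_neg_iff {b c : ℝ} (hbc : b < c) (hcb : c < b + ℓ) : L12 γ b c < 0 ↔ σ b < c := by
  refine ⟨fun hneg => ?_, fun hc => h.L12_neg hc hcb⟩
  rcases lt_trichotomy c (σ b) with hc | rfl | hc
  · exact absurd hneg (h.L12_pos hbc hc).not_gt
  · exact absurd (h.L12_antipode b) hneg.ne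
  · exact hc

lemma mem_Ioo_antipode_sub_iff {a b : ℝ} : a ∈ Ioo (σ b - ℓ) b ↔ b ∈ Ioo a (σ a) := by
  have hswap : L12 γ b (a + ℓ) < 0 ↔ 0 < L12 γ a b := by
    rw [h.L12_add_period_right, L12, ← om_neg_swap, neg_lt_zero, L12]
  constructor
  · intro ha
    have hba : b < a + ℓ := (h.lt_antipode b).trans (sub_lt_iff_lt_add.1 ha.1)
    refine ⟨ha.2, (h.L12_pos_iff ha.2 hba).1 (hswap.1 ?_)⟩
    exact h.L12_neg (sub_lt_iff_lt_add.1 ha.1) (by linarith [ha.2])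
  · intro hb
    have hba : b < a + ℓ := hb.2.trans (h.antipode_lt a)
    refine ⟨sub_lt_iff_lt_add.2 ((h.L12_neg_iff hba (by linarith [hb.1])).1 ?_), hb.1⟩
    exact hswap.2 (h.L12_pos hb.1 hb.2)

lemma mem_phaseSpace_iff {b c : ℝ} (hc : c ∈ Icc b (b + ℓ)) :
    (b, c) ∈ phaseSpace γ ↔ c ∈ Ioo b (σ b) := by
  have hdiag : L12 γ b b = 0 := by rw [L12, om, sub_eq_zero, mul_comm]
  refine ⟨fun (hpos : 0 < L12 γ b c) => ?_, fun hc => h.L12_pos hc.1 hc.2⟩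
  have hbc : b < c := hc.1.lt_of_ne fun heq => hpos.ne' (heq ▸ hdiag)
  refine ⟨hbc, (h.L12_pos_iff hbc (hc.2.lt_of_ne fun heq => hpos.ne' ?_)).1 hpos⟩
  rw [heq, h.L12_add_period_right, hdiag]

lemma exists_zsmul_mem_Ioo {p : ℝ × ℝ} (hp : p ∈ phaseSpace γ) :
    ∃ n : ℤ, p.2 - n • ℓ ∈ Ioo p.1 (σ p.1) := by
  have hper : Function.Periodic (fun c => L12 γ p.1 c) ℓ := h.L12_add_period_right p.1
  have hmod := Ioc_subset_Icc_self (toIocMod_mem_Ioc h.period_pos p.1 p.2)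
  refine ⟨toIocDiv h.period_pos p.1 p.2, (h.mem_phaseSpace_iff hmod).1 ?_⟩
  rw [phaseSpace, mem_ofPred_eq, toIocMod, hper.sub_zsmul_eq]
  exact hp

end Basic

section Height

lemma continuous_height : Continuous fun p : ℝ × ℝ => height γ p.1 p.2 :=
  continuous_om (h.continuous_deriv.comp continuous_fst) (h.continuous.comp continuous_snd)

lemma hasDerivAt_height (b x : ℝ) : HasDerivAt (height γ b) (L12 γ b x) x :=
  hasDerivAt_om_right _ (h.hasDerivAt x)

lemma continuous_height_right (b : ℝ) : Continuous (height γ b) :=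
  continuous_iff_continuousAt.2 fun x => (h.hasDerivAt_height b x).continuousAt

lemma periodic_height (b : ℝ) : Function.Periodic (height γ b) ℓ := fun x => by
  rw [height, h.periodic, height]

lemma strictMonoOn_height (b : ℝ) : StrictMonoOn (height γ b) (Icc b (σ b)) := by
  refine strictMonoOn_of_deriv_pos (convex_Icc _ _) (h.continuous_height_right b).continuousOn
    fun x hx => ?_
  rw [interior_Icc] at hx
  rw [(h.hasDerivAt_height b x).deriv]
  exact h.L12_pos hx.1 hx.2

lemma strictAntiOn_height (b : ℝ) : StrictAntiOn (height γ b) (Icc (σ b - ℓ) b) := by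
  refine strictAntiOn_of_deriv_neg (convex_Icc _ _) (h.continuous_height_right b).continuousOn
    fun x hx => ?_
  rw [interior_Icc] at hx
  rw [(h.hasDerivAt_height b x).deriv, ← h.L12_add_period_right]
  exact h.L12_neg (sub_lt_iff_lt_add.1 hx.1) (add_lt_add_left hx.2 ℓ)

lemma image_height_Ioo_right (b : ℝ) :
    height γ b '' Ioo b (σ b) = Ioo (height γ b b) (height γ b (σ b)) := by
  have hb := (h.lt_antipode b).le
  refine (image_subset_iff.2 fun x hx => ?_).antisymm
    (intermediate_value_Ioo hb (h.continuous_height_right b).continuousOn)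
  have hx' := Ioo_subset_Icc_self hx
  exact ⟨h.strictMonoOn_height b (left_mem_Icc.2 hb) hx' hx.1,
    h.strictMonoOn_height b hx' (right_mem_Icc.2 hb) hx.2⟩

lemma image_height_Ioo_left (b : ℝ) :
    height γ b '' Ioo (σ b - ℓ) b = Ioo (height γ b b) (height γ b (σ b)) := by
  have hb := (h.antipode_sub_lt b).le
  rw [← (h.periodic_height b).sub_eq (σ b)]
  refine (image_subset_iff.2 fun x hx => ?_).antisymm
    (intermediate_value_Ioo' hb (h.continuous_height_right b).continuousOn)
  have hx' := Ioo_subset_Icc_self hx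
  exact ⟨h.strictAntiOn_height b hx' (right_mem_Icc.2 hb) hx.2,
    h.strictAntiOn_height b (left_mem_Icc.2 hb) hx' hx.1⟩

lemma height_mem_image {p : ℝ × ℝ} (hp : p ∈ phaseSpace γ) :
    height γ p.1 p.2 ∈ height γ p.1 '' Ioo (σ p.1 - ℓ) p.1 := by
  obtain ⟨n, hn⟩ := h.exists_zsmul_mem_Ioo hp
  rw [h.image_height_Ioo_left, ← h.image_height_Ioo_right, ← (h.periodic_height p.1).sub_zsmul_eq n]
  exact mem_image_of_mem _ hn

end Height

section InverseMap

lemma prevPoint_mem {p : ℝ × ℝ} (hp : p ∈ phaseSpace γ) :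
    prevPoint ℓ γ σ p ∈ Ioo (σ p.1 - ℓ) p.1 :=
  Function.invFunOn_mem (h.height_mem_image hp)

lemma height_prevPoint {p : ℝ × ℝ} (hp : p ∈ phaseSpace γ) :
    height γ p.1 (prevPoint ℓ γ σ p) = height γ p.1 p.2 :=
  Function.invFunOn_eq (h.height_mem_image hp)

lemma prevPoint_eq {b c a : ℝ} (hp : (b, c) ∈ phaseSpace γ) (ha : a ∈ Icc (σ b - ℓ) b)
    (heq : height γ b a = height γ b c) : prevPoint ℓ γ σ (b, c) = a :=
  (h.strictAntiOn_height b).injOn (Ioo_subset_Icc_self (h.prevPoint_mem hp)) ha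
    ((h.height_prevPoint hp).trans heq.symm)

lemma tendsto_prevPoint {b c a : ℝ} (ha : a ∈ Icc (σ b - ℓ) b)
    (heq : height γ b a = height γ b c) :
    Tendsto (prevPoint ℓ γ σ) (𝓝[phaseSpace γ] (b, c)) (𝓝 a) := by
  have hσ := h.continuous_antipode
  have hheight := h.continuous_height
  have hbound : ∀ᶠ p : ℝ × ℝ in 𝓝[phaseSpace γ] (b, c),
      σ b - ℓ - 1 < σ p.1 - ℓ ∧ p.1 < b + 1 := by
    have hcont : Continuous fun p : ℝ × ℝ => σ p.1 - ℓ := by fun_prop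
    refine ((hcont.continuousAt.eventually_const_lt ?_).and
      (continuousAt_fst.eventually_lt_const ?_)).filter_mono nhdsWithin_le_nhds
    · exact sub_one_lt _
    · exact lt_add_one b
  refine tendsto_of_isClosed_of_unique nhdsWithin_le_nhds
    (isCompact_Icc (a := σ b - ℓ - 1) (b := b + 1)) ?_
    (C := {q | q.2 ∈ Icc (σ q.1.1 - ℓ) q.1.1 ∧ height γ q.1.1 q.2 = height γ q.1.1 q.1.2}) ?_ ?_
    fun x hx => (h.strictAntiOn_height b).injOn hx.1 ha (hx.2.trans heq.symm)
  · filter_upwards [hbound, self_mem_nhdsWithin] with p hp hp'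
    have hmem := h.prevPoint_mem hp'
    exact ⟨(hp.1.trans hmem.1).le, (hmem.2.trans hp.2).le⟩
  · have hlower := isClosed_le (f := fun q : (ℝ × ℝ) × ℝ => σ q.1.1 - ℓ) (g := fun q => q.2)
      (by fun_prop) (by fun_prop)
    have hupper := isClosed_le (f := fun q : (ℝ × ℝ) × ℝ => q.2) (g := fun q => q.1.1)
      (by fun_prop) (by fun_prop)
    exact (hlower.inter hupper).inter (isClosed_eq
      (hheight.comp (continuous_fst.fst.prodMk continuous_snd)) (hheight.comp continuous_fst))
  · filter_upwards [self_mem_nhdsWithin] with p hp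
    exact ⟨Ioo_subset_Icc_self (h.prevPoint_mem hp), h.height_prevPoint hp⟩

lemma mapsTo_billiardInv :
    MapsTo (billiardInv ℓ γ σ) (phaseSpace γ) (phaseSpace γ) := fun p hp => by
  have hmem := h.mem_Ioo_antipode_sub_iff.1 (h.prevPoint_mem hp)
  exact h.L12_pos hmem.1 hmem.2

lemma continuousOn_billiardInv : ContinuousOn (billiardInv ℓ γ σ) (phaseSpace γ) := fun _ hp =>
  ContinuousWithinAt.prodMk (h.tendsto_prevPoint (Ioo_subset_Icc_self (h.prevPoint_mem hp))
    (h.height_prevPoint hp)) continuousWithinAt_fst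

lemma tendsto_billiardInv_diagonal (s : ℝ) :
    Tendsto (billiardInv ℓ γ σ) (𝓝[phaseSpace γ] (s, s))
      (𝓝[phaseSpace γ] (s, s)) := by
  refine tendsto_nhdsWithin_iff.2 ⟨?_, ?_⟩
  · exact (h.tendsto_prevPoint ⟨(h.antipode_sub_lt s).le, le_rfl⟩ rfl).prodMk_nhds
      (continuousWithinAt_fst (s := phaseSpace γ) (p := (s, s)))
  · exact eventually_of_mem self_mem_nhdsWithin h.mapsTo_billiardInv

lemma billiardInv_add_period_right (b c : ℝ) :
    billiardInv ℓ γ σ (b, c + ℓ) = billiardInv ℓ γ σ (b, c) := by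
  simp only [billiardInv, prevPoint, h.periodic_height b c]

lemma billiardInv_add_period_left {b c : ℝ} (hp : (b, c) ∈ phaseSpace γ) :
    billiardInv ℓ γ σ (b + ℓ, c) = billiardInv ℓ γ σ (b, c) + (ℓ, ℓ) := by
  have hmem := h.prevPoint_mem hp
  have hheight : height γ (b + ℓ) = height γ b := by
    funext x
    rw [height, periodic_deriv h.periodic, height]
  refine Prod.ext (h.prevPoint_eq ?_ ?_ ?_) rfl
  · rwa [phaseSpace, mem_ofPred_eq, h.L12_add_period_left]
  · rw [h.antipode_add_period, add_sub_right_comm]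
    exact ⟨add_le_add_left hmem.1.le ℓ, add_le_add_left hmem.2.le ℓ⟩
  · rw [hheight]
    exact (h.periodic_height b _).trans (h.height_prevPoint hp)

end InverseMap

end IsOval

section Diagonal

lemma tendsto_inv_smul_sub_of_hasStrictDerivAt {𝕜 E : Type*} [NontriviallyNormedField 𝕜]
    [NormedAddCommGroup E] [NormedSpace 𝕜 E] {f : 𝕜 → E} {f' : E} {s : 𝕜}
    (hf : HasStrictDerivAt f f' s) :
    Tendsto (fun p : 𝕜 × 𝕜 => (p.2 - p.1)⁻¹ • (f p.2 - f p.1)) (𝓝[(diagonal 𝕜)ᶜ] (s, s))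
      (𝓝 f') := by
  have hswap : Tendsto Prod.swap (𝓝[(diagonal 𝕜)ᶜ] (s, s)) (𝓝 (s, s)) :=
    (continuous_swap.tendsto (s, s)).mono_left nhdsWithin_le_nhds
  have hrem := ((hasStrictFDerivAt_iff_isLittleO.1 hf.hasStrictFDerivAt).comp_tendsto
    hswap).tendsto_inv_smul_nhds_zero.add_const f'
  rw [zero_add] at hrem
  refine hrem.congr' ?_
  filter_upwards [self_mem_nhdsWithin] with p hp
  have hne : p.2 - p.1 ≠ 0 := sub_ne_zero.2 (Ne.symm hp)
  simp only [Function.comp_apply, Prod.fst_swap, Prod.snd_swap,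
    ContinuousLinearMap.toSpanSingleton_apply, smul_sub, inv_smul_smul₀ hne,
    sub_add_cancel]

lemma exists_mem_uIcc_sub_div_sq_eq {f f' : ℝ → ℝ} (hf : ∀ t, HasDerivAt f (f' t) t) {x y : ℝ}
    (hxy : x ≠ y) :
    ∃ ξ ∈ uIcc x y, x ≠ ξ ∧ (f y - f x) / (y - x) ^ 2 = f' ξ / (ξ - x) / 2 := by
  have hcont : Continuous f := continuous_iff_continuousAt.2 fun t => (hf t).continuousAt
  have hsq (t : ℝ) : HasDerivAt (fun t => (t - x) ^ 2) (2 * (t - x)) t := by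
    simpa using ((hasDerivAt_id t).sub_const x).fun_pow 2
  have hyx : y - x ≠ 0 := sub_ne_zero.2 hxy.symm
  have hratio {ξ : ℝ} (hξ : x ≠ ξ) (heq : (y - x) ^ 2 * f' ξ = (f y - f x) * (2 * (ξ - x))) :
      (f y - f x) / (y - x) ^ 2 = f' ξ / (ξ - x) / 2 := by
    have hξx : ξ - x ≠ 0 := sub_ne_zero.2 hξ.symm
    field_simp
    linear_combination -heq
  rcases hxy.lt_or_gt with hlt | hlt
  all_goals
    obtain ⟨ξ, hξ, heq⟩ := exists_ratio_hasDerivAt_eq_ratio_slope f f' hlt hcont.continuousOn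
      (fun t _ => hf t) (fun t => (t - x) ^ 2) (fun t => 2 * (t - x)) (by fun_prop)
      (fun t _ => hsq t)
  · refine ⟨ξ, Icc_subset_uIcc (Ioo_subset_Icc_self hξ), hξ.1.ne, hratio hξ.1.ne ?_⟩
    simpa using heq
  · refine ⟨ξ, Icc_subset_uIcc' (Ioo_subset_Icc_self hξ), hξ.2.ne', hratio hξ.2.ne' ?_⟩
    linear_combination -heq

lemma phaseSpace_subset_compl_diagonal (γ : ℝ → ℝ × ℝ) : phaseSpace γ ⊆ (diagonal ℝ)ᶜ := by
  rintro ⟨b, c⟩ hp (rfl : b = c)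
  refine (show 0 < L12 γ b b from hp).ne' ?_
  rw [L12, om, sub_eq_zero, mul_comm]

end Diagonal

namespace IsOval

variable {ℓ : ℝ} {γ : ℝ → ℝ × ℝ} {σ : ℝ → ℝ} (h : IsOval ℓ γ σ)

include h

section Diagonal

lemma tendsto_inv_smul_sub (s : ℝ) :
    Tendsto (fun p : ℝ × ℝ => (p.2 - p.1)⁻¹ • (γ p.2 - γ p.1)) (𝓝[(diagonal ℝ)ᶜ] (s, s))
      (𝓝 (deriv γ s)) :=
  tendsto_inv_smul_sub_of_hasStrictDerivAt
    (h.contDiff.contDiffAt.hasStrictDerivAt (by decide))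

lemma tendsto_inv_smul_sub_deriv (s : ℝ) :
    Tendsto (fun p : ℝ × ℝ => (p.2 - p.1)⁻¹ • (deriv γ p.2 - deriv γ p.1))
      (𝓝[(diagonal ℝ)ᶜ] (s, s)) (𝓝 (deriv (deriv γ) s)) :=
  tendsto_inv_smul_sub_of_hasStrictDerivAt
    ((contDiff_deriv_of_contDiff_two h.contDiff).contDiffAt.hasStrictDerivAt one_ne_zero)

lemma tendsto_L12_div (s : ℝ) :
    Tendsto (fun p : ℝ × ℝ => L12 γ p.1 p.2 / (p.2 - p.1)) (𝓝[(diagonal ℝ)ᶜ] (s, s))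
      (𝓝 (om (deriv γ s) (deriv (deriv γ) s))) := by
  have hfst : Tendsto (fun p : ℝ × ℝ => deriv γ p.1) (𝓝[(diagonal ℝ)ᶜ] (s, s))
      (𝓝 (deriv γ s)) :=
    ((h.continuous_deriv.comp continuous_fst).tendsto (s, s)).mono_left nhdsWithin_le_nhds
  refine (((continuous_om continuous_fst continuous_snd).tendsto _).comp
    (hfst.prodMk_nhds (h.tendsto_inv_smul_sub_deriv s))).congr fun p => ?_
  simp only [Function.comp_apply, om, L12, Prod.smul_fst, Prod.smul_snd, Prod.fst_sub,
    Prod.snd_sub, smul_eq_mul]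
  ring

lemma tendsto_height_sub_div_sq (s : ℝ) :
    Tendsto (fun p : ℝ × ℝ => (height γ p.1 p.2 - height γ p.1 p.1) / (p.2 - p.1) ^ 2)
      (𝓝[(diagonal ℝ)ᶜ] (s, s)) (𝓝 (om (deriv γ s) (deriv (deriv γ) s) / 2)) := by
  have hmean (p : ℝ × ℝ) : ∃ ξ, p ∈ (diagonal ℝ)ᶜ → ξ ∈ uIcc p.1 p.2 ∧ p.1 ≠ ξ ∧
      (height γ p.1 p.2 - height γ p.1 p.1) / (p.2 - p.1) ^ 2 = L12 γ p.1 ξ / (ξ - p.1) / 2 := by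
    by_cases hp : p ∈ (diagonal ℝ)ᶜ
    · obtain ⟨ξ, hξ⟩ := exists_mem_uIcc_sub_div_sq_eq (h.hasDerivAt_height p.1) hp
      exact ⟨ξ, fun _ => hξ⟩
    · exact ⟨0, fun hp' => absurd hp' hp⟩
  choose ξ hξ using hmean
  have hoff : ∀ᶠ p in 𝓝[(diagonal ℝ)ᶜ] (s, s), p ∈ (diagonal ℝ)ᶜ := self_mem_nhdsWithin
  have hξs : Tendsto ξ (𝓝[(diagonal ℝ)ᶜ] (s, s)) (𝓝 s) := by
    have hmin : Tendsto (fun p : ℝ × ℝ => min p.1 p.2) (𝓝[(diagonal ℝ)ᶜ] (s, s)) (𝓝 s) := by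
      simpa using (continuous_min.tendsto (s, s)).mono_left nhdsWithin_le_nhds
    have hmax : Tendsto (fun p : ℝ × ℝ => max p.1 p.2) (𝓝[(diagonal ℝ)ᶜ] (s, s)) (𝓝 s) := by
      simpa using (continuous_max.tendsto (s, s)).mono_left nhdsWithin_le_nhds
    exact tendsto_of_tendsto_of_tendsto_of_le_of_le' hmin hmax
      (hoff.mono fun p hp => (hξ p hp).1.1) (hoff.mono fun p hp => (hξ p hp).1.2)
  have hpair : Tendsto (fun p => (p.1, ξ p)) (𝓝[(diagonal ℝ)ᶜ] (s, s))
      (𝓝[(diagonal ℝ)ᶜ] (s, s)) :=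
    tendsto_nhdsWithin_iff.2 ⟨(tendsto_nhdsWithin_of_tendsto_nhds
      (continuous_fst.tendsto (s, s))).prodMk_nhds hξs, hoff.mono fun p hp => (hξ p hp).2.1⟩
  exact (((h.tendsto_L12_div s).comp hpair).div_const 2).congr'
    (hoff.mono fun p hp => (hξ p hp).2.2.symm)

end Diagonal

end IsOval

/-- The pivots of Gaussian elimination for the tridiagonal Jacobi operator along the orbit through
`p`, started `n` steps in the past: the diagonal entry at `p.1` is `-(L₁₁ + L₂₂)`, the off-diagonal
entries are `-L₁₂`. They solve the Riccati equation of the Jacobi fields. -/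
noncomputable def pivot (ℓ : ℝ) (γ : ℝ → ℝ × ℝ) (σ : ℝ → ℝ) : ℕ → ℝ × ℝ → ℝ
  | 0, p => -(L11 γ p.1 p.2 + L22 γ (prevPoint ℓ γ σ p) p.1)
  | n + 1, p => -(L11 γ p.1 p.2 + L22 γ (prevPoint ℓ γ σ p) p.1)
      - L12 γ (prevPoint ℓ γ σ p) p.1 ^ 2 / pivot ℓ γ σ n (billiardInv ℓ γ σ p)

lemma pivot_succ (ℓ : ℝ) (γ : ℝ → ℝ × ℝ) (σ : ℝ → ℝ) (n : ℕ) (p : ℝ × ℝ) :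
    pivot ℓ γ σ (n + 1) p = pivot ℓ γ σ 0 p
      - L12 γ (prevPoint ℓ γ σ p) p.1 ^ 2 / pivot ℓ γ σ n (billiardInv ℓ γ σ p) := rfl

namespace IsOval

variable {ℓ : ℝ} {γ : ℝ → ℝ × ℝ} {σ : ℝ → ℝ} (h : IsOval ℓ γ σ)

include h

section DiagonalLimits

lemma tendsto_L12_div_phaseSpace (s : ℝ) :
    Tendsto (fun p : ℝ × ℝ => L12 γ p.1 p.2 / (p.2 - p.1)) (𝓝[phaseSpace γ] (s, s))
      (𝓝 (om (deriv γ s) (deriv (deriv γ) s))) :=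
  (h.tendsto_L12_div s).mono_left (nhdsWithin_mono _ (phaseSpace_subset_compl_diagonal γ))

lemma eventually_fst_lt_snd (s : ℝ) : ∀ᶠ p in 𝓝[phaseSpace γ] (s, s), p.1 < p.2 := by
  filter_upwards [self_mem_nhdsWithin,
    (h.tendsto_L12_div_phaseSpace s).eventually_const_lt (h.curvature_pos s)] with p hp hpos
  exact sub_pos.1 ((div_pos_iff_of_pos_left hp).1 hpos)

lemma tendsto_gap_ratio (s : ℝ) :
    Tendsto (fun p : ℝ × ℝ => (p.1 - prevPoint ℓ γ σ p) / (p.2 - p.1)) (𝓝[phaseSpace γ] (s, s))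
      (𝓝 1) := by
  have hcurv : om (deriv γ s) (deriv (deriv γ) s) / 2 ≠ 0 :=
    (half_pos (h.curvature_pos s)).ne'
  have hnext := (h.tendsto_height_sub_div_sq s).mono_left
    (nhdsWithin_mono _ (phaseSpace_subset_compl_diagonal γ))
  have hpair : Tendsto (fun p => (p.1, prevPoint ℓ γ σ p)) (𝓝[phaseSpace γ] (s, s))
      (𝓝[(diagonal ℝ)ᶜ] (s, s)) := by
    have hswap := (continuous_swap.tendsto (s, s)).comp
      ((h.tendsto_billiardInv_diagonal s).mono_right nhdsWithin_le_nhds)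
    refine tendsto_nhdsWithin_iff.2 ⟨hswap, ?_⟩
    filter_upwards [self_mem_nhdsWithin] with p hp using (h.prevPoint_mem hp).2.ne'
  have hsqrt := (hnext.div ((h.tendsto_height_sub_div_sq s).comp hpair) hcurv).sqrt
  rw [div_self hcurv, Real.sqrt_one] at hsqrt
  refine hsqrt.congr' ?_
  filter_upwards [self_mem_nhdsWithin, h.eventually_fst_lt_snd s] with p hp hlt
  have hprev := (h.prevPoint_mem hp).2
  have hne : height γ p.1 p.2 - height γ p.1 p.1 ≠ 0 := by
    rw [← h.height_prevPoint hp]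
    exact (sub_pos.2 (h.strictAntiOn_height p.1 (Ioo_subset_Icc_self (h.prevPoint_mem hp))
      (right_mem_Icc.2 (h.antipode_sub_lt p.1).le) hprev)).ne'
  have hnext_sub : p.2 - p.1 ≠ 0 := (sub_pos.2 hlt).ne'
  have hprev_sub : prevPoint ℓ γ σ p - p.1 ≠ 0 := (sub_neg.2 hprev).ne
  rw [Real.sqrt_eq_iff_mul_self_eq_of_pos (div_pos (sub_pos.2 hprev) (sub_pos.2 hlt))]
  simp only [Pi.div_apply, Function.comp_apply, h.height_prevPoint hp]
  field_simp [hprev_sub]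
  ring

lemma tendsto_L12_ratio (s : ℝ) :
    Tendsto (fun p : ℝ × ℝ => L12 γ (prevPoint ℓ γ σ p) p.1 / L12 γ p.1 p.2)
      (𝓝[phaseSpace γ] (s, s)) (𝓝 1) := by
  have hcurv := (h.curvature_pos s).ne'
  have hnext := h.tendsto_L12_div_phaseSpace s
  have hlim := ((hnext.comp (h.tendsto_billiardInv_diagonal s)).div hnext hcurv).mul
    (h.tendsto_gap_ratio s)
  rw [div_self hcurv, mul_one] at hlim
  refine hlim.congr' ?_
  filter_upwards [self_mem_nhdsWithin, h.eventually_fst_lt_snd s] with p hp hlt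
  have hnext_sub : p.2 - p.1 ≠ 0 := (sub_pos.2 hlt).ne'
  have hprev_sub : p.1 - prevPoint ℓ γ σ p ≠ 0 := (sub_pos.2 (h.prevPoint_mem hp).2).ne'
  simp only [Pi.div_apply, Function.comp_apply, billiardInv]
  field_simp

lemma tendsto_pivot_zero_ratio (s : ℝ) :
    Tendsto (fun p : ℝ × ℝ => pivot ℓ γ σ 0 p / L12 γ p.1 p.2) (𝓝[phaseSpace γ] (s, s))
      (𝓝 2) := by
  have hcurv := (h.curvature_pos s).ne'
  have hsecant := (h.tendsto_inv_smul_sub s).mono_left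
    (nhdsWithin_mono _ (phaseSpace_subset_compl_diagonal γ))
  have hom {f : ℝ × ℝ → ℝ × ℝ} (hf : Tendsto f (𝓝[phaseSpace γ] (s, s)) (𝓝 (deriv γ s))) :
      Tendsto (fun p => om (f p) (deriv (deriv γ) p.1)) (𝓝[phaseSpace γ] (s, s))
        (𝓝 (om (deriv γ s) (deriv (deriv γ) s))) :=
    ((continuous_om continuous_fst continuous_snd).tendsto _).comp (hf.prodMk_nhds
      (((h.continuous_deriv_deriv.comp continuous_fst).tendsto _).mono_left nhdsWithin_le_nhds))
  have hlim := ((hom hsecant).add ((hom (hsecant.comp (h.tendsto_billiardInv_diagonal s))).mul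
    (h.tendsto_gap_ratio s))).div (h.tendsto_L12_div_phaseSpace s) hcurv
  rw [mul_one, ← two_mul, mul_div_cancel_right₀ _ hcurv] at hlim
  refine hlim.congr' ?_
  filter_upwards [self_mem_nhdsWithin, h.eventually_fst_lt_snd s] with p hp hlt
  have hnext_sub : p.2 - p.1 ≠ 0 := (sub_pos.2 hlt).ne'
  have hprev_sub : p.1 - prevPoint ℓ γ σ p ≠ 0 := (sub_pos.2 (h.prevPoint_mem hp).2).ne'
  simp only [Pi.div_apply, Function.comp_apply, billiardInv, div_div_eq_mul_div]
  congr 1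
  simp only [pivot, om, L11, L22, Prod.smul_fst, Prod.smul_snd, Prod.fst_sub, Prod.snd_sub,
    smul_eq_mul]
  field_simp
  ring

-- Near the diagonal the Jacobi equation becomes `ξₙ₋₁ - 2 ξₙ + ξₙ₊₁ = 0`, whose pivots satisfy
-- `d₀ = 2` and `dₙ₊₁ = 2 - 1 / dₙ`.
lemma tendsto_pivot_ratio (s : ℝ) (n : ℕ) :
    Tendsto (fun p : ℝ × ℝ => pivot ℓ γ σ n p / L12 γ p.1 p.2) (𝓝[phaseSpace γ] (s, s))
      (𝓝 ((n + 2) / (n + 1))) := by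
  induction n with
  | zero => simpa using h.tendsto_pivot_zero_ratio s
  | succ n ih =>
    have hn : ((n : ℝ) + 2) / (n + 1) ≠ 0 := by positivity
    have hlim := (h.tendsto_pivot_zero_ratio s).sub
      ((h.tendsto_L12_ratio s).div (ih.comp (h.tendsto_billiardInv_diagonal s)) hn)
    have hrec : (2 : ℝ) - 1 / ((n + 2) / (n + 1)) = ((n + 1 : ℕ) + 2) / ((n + 1 : ℕ) + 1) := by
      push_cast
      field_simp
      ring
    rw [hrec] at hlim
    refine hlim.congr fun p => ?_
    simp only [Pi.div_apply, Function.comp_apply, pivot_succ, billiardInv, div_eq_mul_inv, mul_inv,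
      inv_inv]
    ring

lemma eventually_pivot_pos (s : ℝ) (n : ℕ) :
    ∀ᶠ p in 𝓝[phaseSpace γ] (s, s), 0 < pivot ℓ γ σ n p := by
  have hlim : (0 : ℝ) < (n + 2) / (n + 1) := by positivity
  filter_upwards [self_mem_nhdsWithin, (h.tendsto_pivot_ratio s n).eventually_const_lt hlim]
    with p hp hpos
  exact (div_pos_iff_of_pos_right hp).1 hpos

end DiagonalLimits

end IsOval

section BiinfiniteSequences

lemma exists_int_sequence {α : Type*} {R : ℤ → α → α → Prop} (hsucc : ∀ n x, ∃ y, R n x y)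
    (hpred : ∀ n y, ∃ x, R n x y) (x₀ : α) :
    ∃ s : ℤ → α, s 0 = x₀ ∧ ∀ n, R n (s n) (s (n + 1)) := by
  choose next hnext using hsucc
  choose prev hprev using hpred
  let s (n : ℤ) : α :=
    n.inductionOn' 0 x₀ (fun n _ x => next n x) (fun n _ x => prev (n - 1) x)
  refine ⟨s, Int.inductionOn'_self, fun n => ?_⟩
  rcases le_or_gt 0 n with hn | hn
  · rw [show s (n + 1) = next n (s n) from Int.inductionOn'_add_one hn]
    exact hnext n _
  · have hs : s (n + 1 - 1) = prev (n + 1 - 1) (s (n + 1)) := Int.inductionOn'_sub_one hn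
    rw [add_sub_cancel_right] at hs
    rw [hs]
    exact hprev n _

lemma exists_isJacobiField {γ : ℝ → ℝ × ℝ} {t : ℤ → ℝ} (ht : ∀ n, L12 γ (t n) (t (n + 1)) ≠ 0)
    (x y : ℝ) : ∃ ξ : ℤ → ℝ, IsJacobiField γ t ξ ∧ ξ 0 = x ∧ ξ 1 = y := by
  let diag (n : ℤ) : ℝ := L22 γ (t (n - 1)) (t n) + L11 γ (t n) (t (n + 1))
  obtain ⟨s, hs₀, hs⟩ := exists_int_sequence (α := ℝ × ℝ)
    (R := fun n p q => p.2 = q.1 ∧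
      L12 γ (t n) (t (n + 1)) * p.1 + diag (n + 1) * p.2
        + L12 γ (t (n + 1)) (t (n + 1 + 1)) * q.2 = 0)
    (fun n p => ⟨(p.2, -(L12 γ (t n) (t (n + 1)) * p.1 + diag (n + 1) * p.2)
      / L12 γ (t (n + 1)) (t (n + 1 + 1))), rfl, by field [ht (n + 1)]⟩)
    (fun n q => ⟨(-(diag (n + 1) * q.1 + L12 γ (t (n + 1)) (t (n + 1 + 1)) * q.2)
      / L12 γ (t n) (t (n + 1)), q.1), rfl, by field [ht n]⟩)
    (x, y)
  refine ⟨fun n => (s n).1, fun n => ?_, congrArg Prod.fst hs₀, ?_⟩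
  · have hrec := (hs (n - 1)).2
    rw [sub_add_cancel, (hs (n - 1)).1, (hs n).1, sub_add_cancel] at hrec
    exact hrec
  · exact (hs 0).1.symm.trans (congrArg Prod.snd hs₀)

end BiinfiniteSequences

/-- Observables of the billiard: continuous functions on the phase space which are compatible with
the periodicity of the boundary parametrization. -/
structure IsPhaseFunction (ℓ : ℝ) (γ : ℝ → ℝ × ℝ) (F : ℝ × ℝ → ℝ) : Prop where
  continuousOn : ContinuousOn F (phaseSpace γ)
  map_add_period_left : ∀ b c, (b, c) ∈ phaseSpace γ → F (b + ℓ, c) = F (b, c)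
  map_add_period_right : ∀ b c, (b, c) ∈ phaseSpace γ → F (b, c + ℓ) = F (b, c)

namespace IsPhaseFunction

variable {ℓ : ℝ} {γ : ℝ → ℝ × ℝ} {F G : ℝ × ℝ → ℝ}

lemma comp₂ {g : ℝ × ℝ → ℝ} (hF : IsPhaseFunction ℓ γ F) (hG : IsPhaseFunction ℓ γ G)
    (hg : ∀ p ∈ phaseSpace γ, ContinuousAt g (F p, G p)) :
    IsPhaseFunction ℓ γ fun p => g (F p, G p) where
  continuousOn p hp := (hg p hp).comp_continuousWithinAt (f := fun p => (F p, G p))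
    ((hF.continuousOn p hp).prodMk (hG.continuousOn p hp))
  map_add_period_left b c hp := by
    rw [hF.map_add_period_left b c hp, hG.map_add_period_left b c hp]
  map_add_period_right b c hp := by
    rw [hF.map_add_period_right b c hp, hG.map_add_period_right b c hp]

lemma neg (hF : IsPhaseFunction ℓ γ F) : IsPhaseFunction ℓ γ fun p => -F p :=
  hF.comp₂ hF fun _ _ => (continuous_fst (X := ℝ) (Y := ℝ)).neg.continuousAt

lemma add (hF : IsPhaseFunction ℓ γ F) (hG : IsPhaseFunction ℓ γ G) :
    IsPhaseFunction ℓ γ fun p => F p + G p :=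
  hF.comp₂ hG fun _ _ => continuous_add.continuousAt

lemma sub (hF : IsPhaseFunction ℓ γ F) (hG : IsPhaseFunction ℓ γ G) :
    IsPhaseFunction ℓ γ fun p => F p - G p :=
  hF.comp₂ hG fun _ _ => continuous_sub.continuousAt

lemma mul (hF : IsPhaseFunction ℓ γ F) (hG : IsPhaseFunction ℓ γ G) :
    IsPhaseFunction ℓ γ fun p => F p * G p :=
  hF.comp₂ hG fun _ _ => continuous_mul.continuousAt

lemma pow (hF : IsPhaseFunction ℓ γ F) (n : ℕ) : IsPhaseFunction ℓ γ fun p => F p ^ n :=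
  hF.comp₂ hF fun _ _ => (continuous_fst (X := ℝ) (Y := ℝ)).continuousAt.pow n

lemma div (hF : IsPhaseFunction ℓ γ F) (hG : IsPhaseFunction ℓ γ G)
    (hG₀ : ∀ p ∈ phaseSpace γ, G p ≠ 0) : IsPhaseFunction ℓ γ fun p => F p / G p :=
  hF.comp₂ hG fun p hp => continuousAt_fst.div continuousAt_snd (hG₀ p hp)

lemma comp_billiardInv {σ : ℝ → ℝ} (hF : IsPhaseFunction ℓ γ F) (h : IsOval ℓ γ σ) :
    IsPhaseFunction ℓ γ (F ∘ billiardInv ℓ γ σ) where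
  continuousOn := hF.continuousOn.comp h.continuousOn_billiardInv h.mapsTo_billiardInv
  map_add_period_left b c hp := by
    have hprev := h.mapsTo_billiardInv hp
    have hprev' : ((billiardInv ℓ γ σ (b, c)).1, (billiardInv ℓ γ σ (b, c)).2 + ℓ) ∈
        phaseSpace γ := by
      rw [phaseSpace, mem_ofPred_eq, h.L12_add_period_right]
      exact hprev
    simp only [Function.comp_apply, h.billiardInv_add_period_left hp]
    exact (hF.map_add_period_left _ _ hprev').trans (hF.map_add_period_right _ _ hprev)
  map_add_period_right b c _ := by
    simp only [Function.comp_apply, h.billiardInv_add_period_right]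

lemma periodic_indicator_left {σ : ℝ → ℝ} (hF : IsPhaseFunction ℓ γ F) (h : IsOval ℓ γ σ) (c : ℝ) :
    Function.Periodic (fun b => (phaseSpace γ).indicator F (b, c)) ℓ := fun b => by
  have hiff : (b + ℓ, c) ∈ phaseSpace γ ↔ (b, c) ∈ phaseSpace γ := by
    rw [phaseSpace, mem_ofPred_eq, mem_ofPred_eq, h.L12_add_period_left]
  beta_reduce
  by_cases hp : (b, c) ∈ phaseSpace γ
  · rw [indicator_of_mem hp, indicator_of_mem (hiff.2 hp), hF.map_add_period_left b c hp]
  · rw [indicator_of_notMem hp, indicator_of_notMem (mt hiff.1 hp)]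

lemma periodic_indicator_right {σ : ℝ → ℝ} (hF : IsPhaseFunction ℓ γ F) (h : IsOval ℓ γ σ) (b : ℝ) :
    Function.Periodic (fun c => (phaseSpace γ).indicator F (b, c)) ℓ := fun c => by
  have hiff : (b, c + ℓ) ∈ phaseSpace γ ↔ (b, c) ∈ phaseSpace γ := by
    rw [phaseSpace, mem_ofPred_eq, mem_ofPred_eq, h.L12_add_period_right]
  beta_reduce
  by_cases hp : (b, c) ∈ phaseSpace γ
  · rw [indicator_of_mem hp, indicator_of_mem (hiff.2 hp), hF.map_add_period_right b c hp]
  · rw [indicator_of_notMem hp, indicator_of_notMem (mt hiff.1 hp)]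

end IsPhaseFunction

/-- Bounded observables of the billiard. -/
structure IsBoundedPhaseFunction (ℓ : ℝ) (γ : ℝ → ℝ × ℝ) (F : ℝ × ℝ → ℝ) : Prop
    extends IsPhaseFunction ℓ γ F where
  exists_bound : ∃ C, ∀ p ∈ phaseSpace γ, |F p| ≤ C

namespace IsBoundedPhaseFunction

variable {ℓ : ℝ} {γ : ℝ → ℝ × ℝ} {F G : ℝ × ℝ → ℝ}

lemma neg (hF : IsBoundedPhaseFunction ℓ γ F) : IsBoundedPhaseFunction ℓ γ fun p => -F p :=
  ⟨hF.toIsPhaseFunction.neg, hF.exists_bound.imp fun _ hC p hp => (abs_neg _).trans_le (hC p hp)⟩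

lemma add (hF : IsBoundedPhaseFunction ℓ γ F) (hG : IsBoundedPhaseFunction ℓ γ G) :
    IsBoundedPhaseFunction ℓ γ fun p => F p + G p := by
  obtain ⟨C, hC⟩ := hF.exists_bound
  obtain ⟨D, hD⟩ := hG.exists_bound
  exact ⟨hF.toIsPhaseFunction.add hG.toIsPhaseFunction, C + D, fun p hp =>
    (abs_add_le _ _).trans (add_le_add (hC p hp) (hD p hp))⟩

lemma mul (hF : IsBoundedPhaseFunction ℓ γ F) (hG : IsBoundedPhaseFunction ℓ γ G) :
    IsBoundedPhaseFunction ℓ γ fun p => F p * G p := by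
  obtain ⟨C, hC⟩ := hF.exists_bound
  obtain ⟨D, hD⟩ := hG.exists_bound
  refine ⟨hF.toIsPhaseFunction.mul hG.toIsPhaseFunction, C * D, fun p hp => ?_⟩
  rw [abs_mul]
  exact mul_le_mul (hC p hp) (hD p hp) (abs_nonneg _) ((abs_nonneg _).trans (hC p hp))

lemma comp_billiardInv {σ : ℝ → ℝ} (hF : IsBoundedPhaseFunction ℓ γ F) (h : IsOval ℓ γ σ) :
    IsBoundedPhaseFunction ℓ γ (F ∘ billiardInv ℓ γ σ) :=
  ⟨hF.toIsPhaseFunction.comp_billiardInv h,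
    hF.exists_bound.imp fun _ hC _ hp => hC _ (h.mapsTo_billiardInv hp)⟩

lemma of_continuous {f : ℝ × ℝ → ℝ} (hℓ : 0 < ℓ) (hf : Continuous f)
    (hleft : ∀ b c, f (b + ℓ, c) = f (b, c)) (hright : ∀ b c, f (b, c + ℓ) = f (b, c)) :
    IsBoundedPhaseFunction ℓ γ f := by
  obtain ⟨C, hC⟩ := (isCompact_Icc.prod isCompact_Icc).exists_bound_of_continuousOn
    (s := Icc 0 (0 + ℓ) ×ˢ Icc 0 (0 + ℓ)) hf.continuousOn
  refine ⟨⟨hf.continuousOn, fun b c _ => hleft b c, fun b c _ => hright b c⟩, C, fun p _ => ?_⟩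
  have hmod (x : ℝ) : toIocMod hℓ 0 x ∈ Icc 0 (0 + ℓ) :=
    Ioc_subset_Icc_self (toIocMod_mem_Ioc hℓ 0 x)
  have hbound := hC (toIocMod hℓ 0 p.1, toIocMod hℓ 0 p.2) ⟨hmod p.1, hmod p.2⟩
  have hleft' (c : ℝ) : Function.Periodic (fun b => f (b, c)) ℓ := fun b => hleft b c
  have hright' (b : ℝ) : Function.Periodic (fun c => f (b, c)) ℓ := fun c => hright b c
  rw [toIocMod, toIocMod] at hbound
  rwa [← Real.norm_eq_abs, ← (hleft' p.2).sub_zsmul_eq (toIocDiv hℓ 0 p.1),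
    ← (hright' _).sub_zsmul_eq (toIocDiv hℓ 0 p.2)]

end IsBoundedPhaseFunction

namespace IsOval

variable {ℓ : ℝ} {γ : ℝ → ℝ × ℝ} {σ : ℝ → ℝ} (h : IsOval ℓ γ σ)

include h

section PhaseFunctions

lemma isBoundedPhaseFunction_L11 : IsBoundedPhaseFunction ℓ γ fun p => L11 γ p.1 p.2 :=
  .of_continuous h.period_pos h.continuous_L11
    (fun b c => by simp only [L11, periodic_deriv (periodic_deriv h.periodic) b])
    (fun b c => by simp only [L11, h.periodic c])

lemma isBoundedPhaseFunction_L22 : IsBoundedPhaseFunction ℓ γ fun p => L22 γ p.1 p.2 :=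
  .of_continuous h.period_pos h.continuous_L22 (fun b c => by simp only [L22, h.periodic b])
    (fun b c => by simp only [L22, periodic_deriv (periodic_deriv h.periodic) c])

lemma isBoundedPhaseFunction_L12 : IsBoundedPhaseFunction ℓ γ fun p => L12 γ p.1 p.2 :=
  .of_continuous h.period_pos h.continuous_L12 h.L12_add_period_left h.L12_add_period_right

lemma isBoundedPhaseFunction_pivot_zero : IsBoundedPhaseFunction ℓ γ (pivot ℓ γ σ 0) :=
  (h.isBoundedPhaseFunction_L11.add (h.isBoundedPhaseFunction_L22.comp_billiardInv h)).neg

lemma isPhaseFunction_pivot_succ {n : ℕ} (hn : IsPhaseFunction ℓ γ (pivot ℓ γ σ n))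
    (hpos : ∀ p ∈ phaseSpace γ, 0 < pivot ℓ γ σ n p) :
    IsPhaseFunction ℓ γ (pivot ℓ γ σ (n + 1)) := by
  have hL := h.isBoundedPhaseFunction_L12.toIsPhaseFunction
  exact h.isBoundedPhaseFunction_pivot_zero.sub <|
    ((hL.pow 2).div hn fun p hp => (hpos p hp).ne').comp_billiardInv h

end PhaseFunctions

section Orbits

lemma exists_orbit {b c : ℝ} (hc : c ∈ Ioo b (σ b)) :
    ∃ t : ℤ → ℝ, t 0 = b ∧ t 1 = c ∧ (∀ n, (t n, t (n + 1)) ∈ phaseSpace γ) ∧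
      ∀ n, prevPoint ℓ γ σ (t n, t (n + 1)) = t (n - 1) := by
  have hstrip {p : ℝ × ℝ} (hp : p.2 ∈ Ioo p.1 (σ p.1)) : p ∈ phaseSpace γ := h.L12_pos hp.1 hp.2
  obtain ⟨s, hs₀, hs⟩ := exists_int_sequence (α := {p : ℝ × ℝ // p.2 ∈ Ioo p.1 (σ p.1)})
    (R := fun _ p q => billiardInv ℓ γ σ q = p)
    (fun _ ⟨⟨a, b⟩, hb⟩ => by
      have ha := h.mem_Ioo_antipode_sub_iff.2 hb
      obtain ⟨c, hc, heq⟩ : height γ b a ∈ height γ b '' Ioo b (σ b) := by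
        rw [h.image_height_Ioo_right, ← h.image_height_Ioo_left]
        exact mem_image_of_mem _ ha
      exact ⟨⟨(b, c), hc⟩, Prod.ext
        (h.prevPoint_eq (h.L12_pos hc.1 hc.2) (Ioo_subset_Icc_self ha) heq.symm) rfl⟩)
    (fun _ q => ⟨⟨billiardInv ℓ γ σ q,
      h.mem_Ioo_antipode_sub_iff.1 (h.prevPoint_mem (hstrip q.2))⟩, rfl⟩)
    ⟨(b, c), hc⟩
  have hnext (n : ℤ) : (s (n + 1)).1.1 = (s n).1.2 := congrArg Prod.snd (hs n)
  have hpair (n : ℤ) : ((s n).1.1, (s (n + 1)).1.1) = (s n).1 := by rw [hnext]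
  refine ⟨fun n => (s n).1.1, ?_, ?_, fun n => ?_, fun n => ?_⟩
  · exact congrArg (fun p => p.1.1) hs₀
  · exact (hnext 0).trans (congrArg (fun p => p.1.2) hs₀)
  · rw [hpair]
    exact hstrip (s n).2
  · have hprev := congrArg Prod.fst (hs (n - 1))
    rw [sub_add_cancel] at hprev
    rw [hpair]
    exact hprev

lemma isConfiguration_of_prevPoint_eq {t : ℤ → ℝ} (ht : ∀ n, (t n, t (n + 1)) ∈ phaseSpace γ)
    (hprev : ∀ n, prevPoint ℓ γ σ (t n, t (n + 1)) = t (n - 1)) : IsConfiguration γ t := by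
  refine ⟨ht, fun n => ?_⟩
  rw [om_sub_right, ← hprev n, sub_eq_zero]
  exact (h.height_prevPoint (ht n)).symm

end Orbits

end IsOval

-- The pivots are the slopes `L₁₂ ξⱼ₊₁ / ξⱼ` of the Jacobi fields `ξ` vanishing `m + 1` steps
-- earlier.
lemma IsJacobiField.eq_zero_of_pivot_mul_eq {ℓ : ℝ} {γ : ℝ → ℝ × ℝ} {σ : ℝ → ℝ} {t ξ : ℤ → ℝ}
    (hξ : IsJacobiField γ t ξ) (ht : ∀ n, (t n, t (n + 1)) ∈ phaseSpace γ)
    (hprev : ∀ n, prevPoint ℓ γ σ (t n, t (n + 1)) = t (n - 1)) {m : ℕ}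
    (hpivot : ∀ k < m, ∀ p ∈ phaseSpace γ, pivot ℓ γ σ k p ≠ 0) {j : ℤ}
    (hj : pivot ℓ γ σ m (t j, t (j + 1)) * ξ j = L12 γ (t j) (t (j + 1)) * ξ (j + 1)) :
    ξ (j - m - 1) = 0 := by
  have hL (n : ℤ) : L12 γ (t (n - 1)) (t n) ≠ 0 := by
    have hn := ht (n - 1)
    rw [sub_add_cancel] at hn
    exact hn.ne'
  induction m generalizing j with
  | zero =>
    have hrec := hξ j
    rw [pivot, hprev] at hj
    rw [Nat.cast_zero, sub_zero]
    refine (mul_eq_zero.1 ?_).resolve_left (hL j)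
    linear_combination hrec + hj
  | succ m ih =>
    have hrec := hξ j
    have hd := hpivot m m.lt_succ_self (t (j - 1), t (j - 1 + 1)) (ht (j - 1))
    rw [pivot_succ, pivot, billiardInv, hprev] at hj
    rw [Nat.cast_succ, show j - (m + 1) - 1 = j - 1 - m - 1 by ring]
    refine ih (fun k hk => hpivot k (hk.trans m.lt_succ_self)) ?_
    rw [sub_add_cancel] at hd ⊢
    refine mul_left_cancel₀ (hL j) ?_
    field_simp at hj
    linear_combination pivot ℓ γ σ m (t (j - 1), t j) * hrec + hj

/-- No Jacobi field along a billiard configuration vanishes twice. -/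
def HasNoConjugatePoints (γ : ℝ → ℝ × ℝ) : Prop :=
  ∀ t : ℤ → ℝ, IsConfiguration γ t → ∀ ξ : ℤ → ℝ, IsJacobiField γ t ξ → ξ ≠ 0 →
    ¬ ∃ M N : ℤ, M < N ∧ ξ M = 0 ∧ ξ N = 0

namespace IsOval

variable {ℓ : ℝ} {γ : ℝ → ℝ × ℝ} {σ : ℝ → ℝ} (h : IsOval ℓ γ σ)

include h

section NoConjugatePoints

lemma pivot_ne_zero (hγ : HasNoConjugatePoints γ) {m : ℕ}
    (hpivot : ∀ k < m, ∀ p ∈ phaseSpace γ, pivot ℓ γ σ k p ≠ 0) {b c : ℝ} (hc : c ∈ Ioo b (σ b)) :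
    pivot ℓ γ σ m (b, c) ≠ 0 := fun hzero => by
  obtain ⟨t, ht₀, ht₁, ht, hprev⟩ := h.exists_orbit hc
  obtain ⟨ξ, hξ, hξ₀, hξ₁⟩ := exists_isJacobiField (fun n => (ht n).ne') 1 0
  have hvanish : ξ (0 - m - 1) = 0 := by
    refine hξ.eq_zero_of_pivot_mul_eq ht hprev hpivot ?_
    rw [zero_add, ht₀, ht₁, hξ₁, hzero, zero_mul, mul_zero]
  refine hγ t (h.isConfiguration_of_prevPoint_eq ht hprev) ξ hξ (fun hξ_zero => ?_)
    ⟨0 - m - 1, 1, by lia, hvanish, hξ₁⟩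
  exact one_ne_zero (hξ₀.symm.trans (congrFun hξ_zero 0))

lemma pivot_pos_of_mem_Ioo {n : ℕ} (hpivot : IsPhaseFunction ℓ γ (pivot ℓ γ σ n))
    (hne : ∀ b c, c ∈ Ioo b (σ b) → pivot ℓ γ σ n (b, c) ≠ 0) {b c : ℝ} (hc : c ∈ Ioo b (σ b)) :
    0 < pivot ℓ γ σ n (b, c) := by
  have hstrip {x : ℝ} (hx : x ∈ Ioo b (σ b)) : (b, x) ∈ phaseSpace γ := h.L12_pos hx.1 hx.2
  have hcont : ContinuousOn (fun x => pivot ℓ γ σ n (b, x)) (Ioo b (σ b)) :=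
    hpivot.continuousOn.comp (by fun_prop) fun x hx => hstrip hx
  have hnear : ∀ᶠ x in 𝓝[>] b, x ∈ Ioo b (σ b) := Ioo_mem_nhdsGT (h.lt_antipode b)
  have hdiag : Tendsto (fun x => (b, x)) (𝓝[>] b) (𝓝[phaseSpace γ] (b, b)) :=
    tendsto_nhdsWithin_iff.2 ⟨((Continuous.prodMk_right b).tendsto b).mono_left
      nhdsWithin_le_nhds, hnear.mono fun x hx => hstrip hx⟩
  obtain ⟨x, hpos, hx⟩ := ((hdiag.eventually (h.eventually_pivot_pos b n)).and hnear).exists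
  by_contra! hle
  obtain ⟨y, hy, hzero⟩ := isPreconnected_Ioo.intermediate_value hc hx hcont ⟨hle, hpos.le⟩
  exact hne b y hy hzero

lemma pivot_pos_of_ne_zero {n : ℕ} (hpivot : IsPhaseFunction ℓ γ (pivot ℓ γ σ n))
    (hne : ∀ b c, c ∈ Ioo b (σ b) → pivot ℓ γ σ n (b, c) ≠ 0) :
    ∀ p ∈ phaseSpace γ, 0 < pivot ℓ γ σ n p := fun p hp => by
  obtain ⟨m, hm⟩ := h.exists_zsmul_mem_Ioo hp
  have hshift : pivot ℓ γ σ n (p.1, p.2 - m • ℓ) = pivot ℓ γ σ n p := by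
    have hper := (hpivot.periodic_indicator_right h p.1).sub_zsmul_eq m (x := p.2)
    have hmem : (p.1, p.2 - m • ℓ) ∈ phaseSpace γ := h.L12_pos hm.1 hm.2
    beta_reduce at hper
    rwa [indicator_of_mem hmem, indicator_of_mem hp] at hper
  rw [← hshift]
  exact h.pivot_pos_of_mem_Ioo hpivot hne hm

lemma isPhaseFunction_pivot_and_pos (hγ : HasNoConjugatePoints γ) (n : ℕ) :
    IsPhaseFunction ℓ γ (pivot ℓ γ σ n) ∧ ∀ p ∈ phaseSpace γ, 0 < pivot ℓ γ σ n p := by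
  induction n using Nat.strong_induction_on with
  | _ n ih =>
    have hpivot : IsPhaseFunction ℓ γ (pivot ℓ γ σ n) := by
      cases n with
      | zero => exact h.isBoundedPhaseFunction_pivot_zero.toIsPhaseFunction
      | succ n =>
        obtain ⟨hn, hpos⟩ := ih n n.lt_succ_self
        exact h.isPhaseFunction_pivot_succ hn hpos
    exact ⟨hpivot, h.pivot_pos_of_ne_zero hpivot fun b c =>
      h.pivot_ne_zero hγ fun k hk p hp => ((ih k hk).2 p hp).ne'⟩

end NoConjugatePoints

end IsOval

lemma setIntegral_Icc_eq_Ioc_of_periodic {E : Type*} [NormedAddCommGroup E] [NormedSpace ℝ E]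
    {f : ℝ → E} {T : ℝ} (hT : 0 ≤ T) (hf : Function.Periodic f T) (x : ℝ) :
    ∫ y in Icc 0 T, f y = ∫ y in Ioc x (x + T), f y := by
  have hshift := hf.intervalIntegral_add_eq 0 x
  rwa [zero_add, intervalIntegral.integral_of_le hT,
    intervalIntegral.integral_of_le (le_add_of_nonneg_right hT), ← integral_Icc_eq_integral_Ioc]
    at hshift

/-- A fundamental domain for the translations of the phase space by multiples of the period. -/
def fundamentalDomain (ℓ : ℝ) (γ : ℝ → ℝ × ℝ) : Set (ℝ × ℝ) := (Icc 0 ℓ ×ˢ Icc 0 ℓ) ∩ phaseSpace γ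

/-- The integral of an observable with respect to the area measure `L₁₂ dt₁ dt₂` on the phase space
modulo the period, which the billiard map preserves. -/
noncomputable def phaseIntegral (ℓ : ℝ) (γ : ℝ → ℝ × ℝ) (F : ℝ × ℝ → ℝ) : ℝ :=
  ∫ p in fundamentalDomain ℓ γ, F p * L12 γ p.1 p.2

namespace IsOval

variable {ℓ : ℝ} {γ : ℝ → ℝ × ℝ} {σ : ℝ → ℝ} {F G : ℝ × ℝ → ℝ} (h : IsOval ℓ γ σ)

include h

section InvariantMeasure

lemma measurableSet_phaseSpace : MeasurableSet (phaseSpace γ) :=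
  (isOpen_lt continuous_const h.continuous_L12).measurableSet

lemma measurableSet_fundamentalDomain : MeasurableSet (fundamentalDomain ℓ γ) :=
  (measurableSet_Icc.prod measurableSet_Icc).inter h.measurableSet_phaseSpace

lemma setIntegral_indicator_right (hF : IsPhaseFunction ℓ γ F) (b : ℝ) :
    ∫ c in Icc 0 ℓ, (phaseSpace γ).indicator F (b, c) = ∫ c in Ioo b (σ b), F (b, c) := by
  have hsub : Ioo b (σ b) ⊆ Ioc b (b + ℓ) := fun c hc =>
    ⟨hc.1, (hc.2.trans (h.antipode_lt b)).le⟩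
  have hfiber : EqOn (fun c => (phaseSpace γ).indicator F (b, c))
      ((Ioo b (σ b)).indicator fun c => F (b, c)) (Ioc b (b + ℓ)) := fun c hc => by
    simp only [indicator, h.mem_phaseSpace_iff (Ioc_subset_Icc_self hc)]
  rw [setIntegral_Icc_eq_Ioc_of_periodic h.period_pos.le (hF.periodic_indicator_right h b) b,
    setIntegral_congr_fun measurableSet_Ioc hfiber, setIntegral_indicator measurableSet_Ioo,
    inter_eq_self_of_subset_right hsub]

lemma setIntegral_indicator_left (hF : IsPhaseFunction ℓ γ F) (b : ℝ) :
    ∫ a in Icc 0 ℓ, (phaseSpace γ).indicator F (a, b) = ∫ a in Ioo (σ b - ℓ) b, F (a, b) := by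
  have hsub : Ioo (σ b - ℓ) b ⊆ Ioc (b - ℓ) b := fun a ha =>
    ⟨(sub_lt_sub_right (h.lt_antipode b) ℓ).trans ha.1, ha.2.le⟩
  have hfiber : EqOn (fun a => (phaseSpace γ).indicator F (a, b))
      ((Ioo (σ b - ℓ) b).indicator fun a => F (a, b)) (Ioc (b - ℓ) b) := fun a ha => by
    have hb : b ∈ Icc a (a + ℓ) := ⟨ha.2, (sub_lt_iff_lt_add.1 ha.1).le⟩
    simp only [indicator, h.mem_phaseSpace_iff hb, h.mem_Ioo_antipode_sub_iff]
  rw [setIntegral_Icc_eq_Ioc_of_periodic h.period_pos.le (hF.periodic_indicator_left h b) (b - ℓ),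
    sub_add_cancel, setIntegral_congr_fun measurableSet_Ioc hfiber,
    setIntegral_indicator measurableSet_Ioo, inter_eq_self_of_subset_right hsub]

-- Both sides become the same integral in the variable `height γ b c = height γ b a`.
lemma setIntegral_fiber_comp_billiardInv (F : ℝ × ℝ → ℝ) (b : ℝ) :
    ∫ c in Ioo b (σ b), F (billiardInv ℓ γ σ (b, c)) * L12 γ b c =
      ∫ a in Ioo (σ b - ℓ) b, F (a, b) * L12 γ a b := by
  let H (y : ℝ) : ℝ := F (Function.invFunOn (height γ b) (Ioo (σ b - ℓ) b) y, b)
  have hanti := (h.strictAntiOn_height b).injOn.mono Ioo_subset_Icc_self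
  calc ∫ c in Ioo b (σ b), F (billiardInv ℓ γ σ (b, c)) * L12 γ b c
    _ = ∫ c in Ioo b (σ b), |L12 γ b c| • H (height γ b c) :=
        setIntegral_congr_fun measurableSet_Ioo fun c hc => by
          rw [abs_of_pos (h.L12_pos hc.1 hc.2), smul_eq_mul, mul_comm]
          rfl
    _ = ∫ y in height γ b '' Ioo b (σ b), H y :=
        (integral_image_eq_integral_abs_deriv_smul measurableSet_Ioo
          (fun x _ => (h.hasDerivAt_height b x).hasDerivWithinAt)
          ((h.strictMonoOn_height b).injOn.mono Ioo_subset_Icc_self) H).symm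
    _ = ∫ y in height γ b '' Ioo (σ b - ℓ) b, H y := by
        rw [h.image_height_Ioo_right, h.image_height_Ioo_left]
    _ = ∫ a in Ioo (σ b - ℓ) b, |L12 γ b a| • H (height γ b a) :=
        integral_image_eq_integral_abs_deriv_smul measurableSet_Ioo
          (fun x _ => (h.hasDerivAt_height b x).hasDerivWithinAt) hanti H
    _ = ∫ a in Ioo (σ b - ℓ) b, F (a, b) * L12 γ a b :=
        setIntegral_congr_fun measurableSet_Ioo fun a ha => by
          have hb := h.mem_Ioo_antipode_sub_iff.1 ha
          have hpos : 0 < L12 γ a b := h.L12_pos hb.1 hb.2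
          have habs : |L12 γ b a| = L12 γ a b := by
            rw [L12, ← om_neg_swap, abs_neg]
            exact abs_of_pos hpos
          simp only [H, habs, hanti.leftInvOn_invFunOn ha, smul_eq_mul, mul_comm]

end InvariantMeasure

section Boundedness

lemma isBoundedPhaseFunction_pivot (hγ : HasNoConjugatePoints γ) (n : ℕ) :
    IsBoundedPhaseFunction ℓ γ (pivot ℓ γ σ n) := by
  have hle : ∀ p ∈ phaseSpace γ, pivot ℓ γ σ n p ≤ pivot ℓ γ σ 0 p := fun p hp => by
    cases n with
    | zero => exact le_rfl
    | succ n =>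
      have hpos := (h.isPhaseFunction_pivot_and_pos hγ n).2 _ (h.mapsTo_billiardInv hp)
      rw [pivot_succ]
      exact sub_le_self _ (by positivity)
  obtain ⟨hn, hpos⟩ := h.isPhaseFunction_pivot_and_pos hγ n
  refine ⟨hn, h.isBoundedPhaseFunction_pivot_zero.exists_bound.imp fun C hC p hp => ?_⟩
  rw [abs_of_pos (hpos p hp)]
  exact (hle p hp).trans ((le_abs_self _).trans (hC p hp))

lemma integrableOn_mul_L12 (hF : IsBoundedPhaseFunction ℓ γ F) :
    IntegrableOn (fun p => F p * L12 γ p.1 p.2) (fundamentalDomain ℓ γ) := by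
  have hFL := hF.mul h.isBoundedPhaseFunction_L12
  obtain ⟨C, hC⟩ := hFL.exists_bound
  have hfinite : volume (fundamentalDomain ℓ γ) < ⊤ :=
    (measure_mono inter_subset_left).trans_lt (isCompact_Icc.prod isCompact_Icc).measure_lt_top
  exact .of_bound hfinite
    ((hFL.continuousOn.mono inter_subset_right).aestronglyMeasurable
      h.measurableSet_fundamentalDomain) C
    ((ae_restrict_iff' h.measurableSet_fundamentalDomain).2 (.of_forall fun p hp => hC p hp.2))

end Boundedness

section PhaseIntegral

lemma phaseIntegral_comp_billiardInv (hF : IsBoundedPhaseFunction ℓ γ F) :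
    phaseIntegral ℓ γ (F ∘ billiardInv ℓ γ σ) = phaseIntegral ℓ γ F := by
  have hmeas := h.measurableSet_phaseSpace
  have hL := h.isBoundedPhaseFunction_L12.toIsPhaseFunction
  have hF' := hF.comp_billiardInv h
  have hint {G : ℝ × ℝ → ℝ} (hG : IsBoundedPhaseFunction ℓ γ G) : IntegrableOn
      ((phaseSpace γ).indicator fun p => G p * L12 γ p.1 p.2) (Icc 0 ℓ ×ˢ Icc 0 ℓ) := by
    rw [integrableOn_indicator_iff hmeas, inter_comm]
    exact h.integrableOn_mul_L12 hG
  rw [phaseIntegral, phaseIntegral, fundamentalDomain, ← setIntegral_indicator hmeas,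
    ← setIntegral_indicator hmeas, Measure.volume_eq_prod, setIntegral_prod _ (hint hF'),
    ← setIntegral_prod_swap]
  refine Eq.trans ?_ (setIntegral_prod _ (hint hF).swap).symm
  refine setIntegral_congr_fun measurableSet_Icc fun b _ => ?_
  exact (h.setIntegral_indicator_right (hF'.toIsPhaseFunction.mul hL) b).trans <|
    (h.setIntegral_fiber_comp_billiardInv F b).trans
      (h.setIntegral_indicator_left (hF.toIsPhaseFunction.mul hL) b).symm

lemma phaseIntegral_add (hF : IsBoundedPhaseFunction ℓ γ F) (hG : IsBoundedPhaseFunction ℓ γ G) :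
    phaseIntegral ℓ γ (fun p => F p + G p) = phaseIntegral ℓ γ F + phaseIntegral ℓ γ G := by
  simp only [phaseIntegral, add_mul]
  exact integral_add (h.integrableOn_mul_L12 hF) (h.integrableOn_mul_L12 hG)

lemma phaseIntegral_mono (hF : IsBoundedPhaseFunction ℓ γ F) (hG : IsBoundedPhaseFunction ℓ γ G)
    (hle : ∀ p ∈ phaseSpace γ, F p ≤ G p) : phaseIntegral ℓ γ F ≤ phaseIntegral ℓ γ G :=
  setIntegral_mono_on (h.integrableOn_mul_L12 hF) (h.integrableOn_mul_L12 hG)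
    h.measurableSet_fundamentalDomain fun p hp =>
      mul_le_mul_of_nonneg_right (hle p hp.2) (le_of_lt hp.2)

lemma phaseIntegral_nonneg (hF : ∀ p ∈ phaseSpace γ, 0 ≤ F p) : 0 ≤ phaseIntegral ℓ γ F :=
  setIntegral_nonneg h.measurableSet_fundamentalDomain fun p hp =>
    mul_nonneg (hF p hp.2) (le_of_lt hp.2)

end PhaseIntegral

section Rigidity

lemma pivot_succ_add_le (hγ : HasNoConjugatePoints γ) (n : ℕ) {p : ℝ × ℝ} (hp : p ∈ phaseSpace γ) :
    pivot ℓ γ σ (n + 1) p + L11 γ p.1 p.2 +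
      (L22 γ (prevPoint ℓ γ σ p) p.1 + 2 * L12 γ (prevPoint ℓ γ σ p) p.1) ≤
      pivot ℓ γ σ n (billiardInv ℓ γ σ p) := by
  have hpos := (h.isPhaseFunction_pivot_and_pos hγ n).2 _ (h.mapsTo_billiardInv hp)
  set d := pivot ℓ γ σ n (billiardInv ℓ γ σ p) with hd
  set x := L12 γ (prevPoint ℓ γ σ p) p.1 with hx
  have hsq : 2 * x - d ≤ x ^ 2 / d := by
    rw [le_div_iff₀ hpos]
    linarith [sq_nonneg (x - d)]
  rw [pivot_succ, pivot, ← hx, ← hd]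
  linarith

lemma phaseIntegral_pivot_succ_add_le (hγ : HasNoConjugatePoints γ) (n : ℕ) :
    phaseIntegral ℓ γ (pivot ℓ γ σ (n + 1)) +
      phaseIntegral ℓ γ (fun p => L11 γ p.1 p.2 + 2 * L12 γ p.1 p.2 + L22 γ p.1 p.2) ≤
      phaseIntegral ℓ γ (pivot ℓ γ σ n) := by
  have h₁₁ := h.isBoundedPhaseFunction_L11
  have htwo : IsBoundedPhaseFunction ℓ γ fun _ => 2 :=
    .of_continuous h.period_pos continuous_const (fun _ _ => rfl) fun _ _ => rfl
  have h₂ := h.isBoundedPhaseFunction_L22.add (htwo.mul h.isBoundedPhaseFunction_L12)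
  have hpivot := h.isBoundedPhaseFunction_pivot hγ
  calc _ = phaseIntegral ℓ γ (pivot ℓ γ σ (n + 1)) +
        (phaseIntegral ℓ γ (fun p => L11 γ p.1 p.2) +
          phaseIntegral ℓ γ fun p => L22 γ p.1 p.2 + 2 * L12 γ p.1 p.2) := by
        rw [← h.phaseIntegral_add h₁₁ h₂]
        congr 2 with p
        ring
    _ = phaseIntegral ℓ γ _ := by
        rw [← h.phaseIntegral_comp_billiardInv h₂, ← add_assoc,
          ← h.phaseIntegral_add (hpivot (n + 1)) h₁₁,
          ← h.phaseIntegral_add ((hpivot (n + 1)).add h₁₁) (h₂.comp_billiardInv h)]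
    _ ≤ phaseIntegral ℓ γ (pivot ℓ γ σ n ∘ billiardInv ℓ γ σ) :=
        h.phaseIntegral_mono (((hpivot (n + 1)).add h₁₁).add (h₂.comp_billiardInv h))
          ((hpivot n).comp_billiardInv h) fun p hp => h.pivot_succ_add_le hγ n hp
    _ = phaseIntegral ℓ γ (pivot ℓ γ σ n) := h.phaseIntegral_comp_billiardInv (hpivot n)

end Rigidity

end IsOval

lemma nonpos_of_forall_add_le {J : ℝ} {a : ℕ → ℝ} (ha : ∀ n, 0 ≤ a n)
    (hstep : ∀ n, a (n + 1) + J ≤ a n) : J ≤ 0 := by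
  have hsum (n : ℕ) : a n + n • J ≤ a 0 := by
    induction n with
    | zero => rw [zero_smul, add_zero]
    | succ n ih =>
      rw [succ_nsmul']
      linarith [hstep n]
  by_contra! hJ
  obtain ⟨n, hn⟩ := exists_lt_nsmul hJ (a 0)
  linarith [hsum n, ha n]

theorem bialy_inequality_for_symplectic_billiards_general
    (ℓ : ℝ) (hℓ : 0 < ℓ) (γ : ℝ → ℝ × ℝ)
    (hγ : ContDiff ℝ 2 γ)
    (hper : ∀ t, γ (t + ℓ) = γ t)
    (hinj : InjOn γ (Ico 0 ℓ))
    (hcurv : ∀ t, 0 < om (deriv γ t) (deriv (deriv γ) t))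
    (hnoconj : HasNoConjugatePoints γ) :
    ∫ q in {q : ℝ × ℝ | q.1 ∈ Icc 0 ℓ ∧ q.2 ∈ Icc 0 ℓ ∧
        0 < om (deriv γ q.1) (deriv γ q.2)},
      (L11 γ q.1 q.2 + 2 * L12 γ q.1 q.2 + L22 γ q.1 q.2) * L12 γ q.1 q.2 ≤ 0 := by
  obtain ⟨σ, h⟩ := exists_isOval hℓ hγ hper hinj hcurv
  have hdomain : {q : ℝ × ℝ | q.1 ∈ Icc 0 ℓ ∧ q.2 ∈ Icc 0 ℓ ∧
      0 < om (deriv γ q.1) (deriv γ q.2)} = fundamentalDomain ℓ γ :=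
    Set.ext fun _ => and_assoc.symm
  rw [hdomain]
  refine nonpos_of_forall_add_le (a := fun n => phaseIntegral ℓ γ (pivot ℓ γ σ n))
    (fun n => h.phaseIntegral_nonneg fun p hp => ?_) (h.phaseIntegral_pivot_succ_add_le hnoconj)
  exact ((h.isPhaseFunction_pivot_and_pos hnoconj n).2 p hp).le

/-- Bialy's inequality for symplectic billiards without conjugate points. -/
theorem bialy_inequality_for_symplectic_billiards
    (ℓ : ℝ) (hℓ : 0 < ℓ) (γ : ℝ → ℝ × ℝ)
    (hsmooth : ContDiff ℝ (⊤ : ℕ∞) γ)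
    (hper : ∀ t, γ (t + ℓ) = γ t)
    (hinj : InjOn γ (Ico 0 ℓ))
    (hcurv : ∀ t, 0 < om (deriv γ t) (deriv (deriv γ) t))
    (hnoconj : ∀ t : ℤ → ℝ, IsConfiguration γ t →
      ∀ ξ : ℤ → ℝ, IsJacobiField γ t ξ → ξ ≠ 0 →
        ¬ ∃ M N : ℤ, M < N ∧ ξ M = 0 ∧ ξ N = 0) :
    ∫ q in {q : ℝ × ℝ | q.1 ∈ Icc 0 ℓ ∧ q.2 ∈ Icc 0 ℓ ∧
        0 < om (deriv γ q.1) (deriv γ q.2)},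
      (L11 γ q.1 q.2 + 2 * L12 γ q.1 q.2 + L22 γ q.1 q.2) * L12 γ q.1 q.2 ≤ 0 :=
  bialy_inequality_for_symplectic_billiards_general ℓ hℓ γ
    (contDiff_infty.1 hsmooth 2) hper hinj hcurv hnoconj
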